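/- arXiv:1109.6528 — 3 statements merged into one kernel-verified Lean document; each statement's English description precedes it below -/
import Mathlib

section
/- Let (R,m) be a local ring and M an R-module of finite and positive G-dimension which is horizontally linked. Then the following are equivalent: (i) depth_R(M) = rgr(λM); (ii) m ∈ Ass_R(Ext^{rgr(λM)}_R(λM,R)); (iii) depth_R(M) ≤ depth_{R_p}(M_p) for each prime p with Gdim_{R_p}(M_p) ≠ 0. -/
open CategoryTheory

noncomputable section

universe u

/-- The `i`-th Ext group `Ext^i_R(M,N)`, as a type (with its `R`-module structure). -/
abbrev extM (R : Type u) [CommRing R] (i : ℕ) (M N : Type u) [AddCommGroup M] [Module R M]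
    [AddCommGroup N] [Module R N] : Type u :=
  ((Ext R (ModuleCat.{u} R) i).obj (Opposite.op (ModuleCat.of R M))).obj (ModuleCat.of R N)

/-- The `i`-th Tor group `Tor^R_i(M,N)`, as a type. -/
abbrev torM (R : Type u) [CommRing R] (i : ℕ) (M N : Type u) [AddCommGroup M] [Module R M]
    [AddCommGroup N] [Module R N] : Type u :=
  ((Tor (ModuleCat.{u} R) i).obj (ModuleCat.of R M)).obj (ModuleCat.of R N)

/-- The `i`-th local cohomology `H^i_I(M)`, as a type. -/
abbrev locCoh (R : Type u) [CommRing R] (I : Ideal R) (i : ℕ) (M : Type u) [AddCommGroup M]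
    [Module R M] : Type u :=
  (localCohomology I i).obj (ModuleCat.of R M)

/-- A submodule `N ≤ M` is superfluous if `K ⊔ N = ⊤` implies `K = ⊤`. -/
def Submodule.IsSuperfluous {R M : Type u} [CommRing R] [AddCommGroup M] [Module R M]
    (N : Submodule R M) : Prop :=
  ∀ K : Submodule R M, K ⊔ N = ⊤ → K = ⊤

/-- A minimal projective resolution of `M` by finitely generated projective modules:
each `P i → Ω^i M` is a projective cover (i.e. has superfluous kernel). -/
structure MinRes (R : Type u) [CommRing R] (M : Type u) [AddCommGroup M] [Module R M] where
  P : ℕ → ModuleCat.{u} R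
  projective : ∀ i, Module.Projective R (P i)
  finite : ∀ i, Module.Finite R (P i)
  d : (i : ℕ) → (↥(P (i + 1)) →ₗ[R] ↥(P i))
  ε : ↥(P 0) →ₗ[R] M
  surj : Function.Surjective ε
  exact0 : LinearMap.range (d 0) = LinearMap.ker ε
  exact : ∀ i, LinearMap.range (d (i + 1)) = LinearMap.ker (d i)
  min_eps : (LinearMap.ker ε).IsSuperfluous
  min_d : ∀ i, (LinearMap.ker (d i)).IsSuperfluous

namespace MinRes

variable {R M : Type u} [CommRing R] [AddCommGroup M] [Module R M]

/-- `T k F` is the Auslander-Bridger transpose `𝒯_{k+1} M = Tr Ω^k M`, computed as the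
cokernel of `P_k* → P_{k+1}*`. -/
def T (F : MinRes R M) (k : ℕ) : Type u :=
  (Module.Dual R ↥(F.P (k + 1))) ⧸ LinearMap.range (F.d k).dualMap

instance (F : MinRes R M) (k : ℕ) : AddCommGroup (F.T k) :=
  inferInstanceAs (AddCommGroup ((Module.Dual R ↥(F.P (k + 1))) ⧸
    LinearMap.range (F.d k).dualMap))

instance (F : MinRes R M) (k : ℕ) : Module R (F.T k) :=
  inferInstanceAs (Module R ((Module.Dual R ↥(F.P (k + 1))) ⧸
    LinearMap.range (F.d k).dualMap))

/-- The transpose `Tr M = coker(P₀* → P₁*)` computed from a minimal projective presentation. -/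
abbrev Tr (F : MinRes R M) : Type u := F.T 0

/-- `λM = ΩTr M`, realized as the image of `P₀* → P₁*` for a minimal projective
presentation `P₁ → P₀ → M → 0`. -/
def lambdaMod (F : MinRes R M) : Type u :=
  ↥(LinearMap.range (F.d 0).dualMap)

instance (F : MinRes R M) : AddCommGroup F.lambdaMod :=
  inferInstanceAs (AddCommGroup ↥(LinearMap.range (F.d 0).dualMap))

instance (F : MinRes R M) : Module R F.lambdaMod :=
  inferInstanceAs (Module R ↥(LinearMap.range (F.d 0).dualMap))

end MinRes

/-- `M` is a horizontally linked `R`-module, i.e. `M ≅ λλM`. -/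
def IsHorizontallyLinked (R : Type u) [CommRing R] (M : Type u) [AddCommGroup M]
    [Module R M] : Prop :=
  ∃ (F : MinRes R M) (G : MinRes R F.lambdaMod), Nonempty (G.lambdaMod ≃ₗ[R] M)

/-- `M` and `N` are horizontally linked to each other: `M ≅ λN` and `N ≅ λM`. -/
def MutuallyLinked (A : Type u) [CommRing A] (M N : Type u) [AddCommGroup M] [Module A M]
    [AddCommGroup N] [Module A N] : Prop :=
  ∃ (F : MinRes A M) (G : MinRes A N),
    Nonempty (F.lambdaMod ≃ₗ[A] N) ∧ Nonempty (G.lambdaMod ≃ₗ[A] M)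

/-- `M` is linked to `N` by the ideal `c`: `c` annihilates both modules and they are
horizontally linked to each other as `R ⧸ c`-modules. -/
def LinkedBy (R : Type u) [CommRing R] (c : Ideal R) (M N : Type u) [AddCommGroup M]
    [Module R M] [AddCommGroup N] [Module R N] : Prop :=
  ∃ (hM : Module.IsTorsionBySet R M c) (hN : Module.IsTorsionBySet R N c),
    letI := hM.module
    letI := hN.module
    MutuallyLinked (R ⧸ c) M N

/-- A stable module: no nonzero projective direct summand. -/
def IsStableModule (R : Type u) [CommRing R] (M : Type u) [AddCommGroup M] [Module R M] : Prop :=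
  ∀ N : Submodule R M, Module.Projective R ↥N → (∃ N' : Submodule R M, IsCompl N N') → N = ⊥

/-- `M` has G-dimension zero: `M` is finitely generated and reflexive,
and `Ext^i(M,R) = 0 = Ext^i(M*,R)` for all `i > 0`. -/
def IsGDimZero (R : Type u) [CommRing R] (M : Type u) [AddCommGroup M] [Module R M] : Prop :=
  Module.Finite R M ∧ Function.Bijective (Module.Dual.eval R M) ∧
    (∀ i : ℕ, 0 < i → Subsingleton (extM R i M R)) ∧
    (∀ i : ℕ, 0 < i → Subsingleton (extM R i (Module.Dual R M) R))

/-- `M` admits a resolution of length `≤ n` by modules of G-dimension zero. -/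
def GDimLE (R : Type u) [CommRing R] : ℕ → ModuleCat.{u} R → Prop
  | 0, M => IsGDimZero R ↥M
  | n + 1, M =>
    ∃ (G : ModuleCat.{u} R) (f : ↥G →ₗ[R] ↥M), IsGDimZero R ↥G ∧ Function.Surjective f ∧
      GDimLE R n (ModuleCat.of R ↥(LinearMap.ker f))

/-- The G-dimension of `M`: the minimal length of a resolution of `M` by modules of
G-dimension zero (`∞` if there is none). -/
def GDim (R : Type u) [CommRing R] (M : Type u) [AddCommGroup M] [Module R M] : ℕ∞ :=
  sInf {n : ℕ∞ | ∃ k : ℕ, n = k ∧ GDimLE R k (ModuleCat.of R M)}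

/-- The reduced grade of `M`: `rgr M = inf{ i > 0 | Ext^i(M,R) ≠ 0 }`. -/
def rgr (R : Type u) [CommRing R] (M : Type u) [AddCommGroup M] [Module R M] : ℕ∞ :=
  sInf {n : ℕ∞ | ∃ k : ℕ, n = k ∧ 0 < k ∧ ¬ Subsingleton (extM R k M R)}

/-- The grade of `M`: `gr M = inf{ i ≥ 0 | Ext^i(M,R) ≠ 0 }`. -/
def egrade (R : Type u) [CommRing R] (M : Type u) [AddCommGroup M] [Module R M] : ℕ∞ :=
  sInf {n : ℕ∞ | ∃ k : ℕ, n = k ∧ ¬ Subsingleton (extM R k M R)}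

/-- `depth_I(M) = inf{ i | Ext^i(R/I, M) ≠ 0 }`; for `I` the maximal ideal of a
local ring this is the depth of `M`. -/
def edepth (R : Type u) [CommRing R] (I : Ideal R) (M : Type u) [AddCommGroup M]
    [Module R M] : ℕ∞ :=
  sInf {n : ℕ∞ | ∃ k : ℕ, n = k ∧ ¬ Subsingleton (extM R k (R ⧸ I) M)}

/-- The depth of the local ring `R`. -/
def rdepth (R : Type u) [CommRing R] [IsLocalRing R] : ℕ∞ :=
  edepth R (IsLocalRing.maximalIdeal R) R

/-- `depth_{R_p}(M_p)`. -/
def locDepth (R : Type u) [CommRing R] (p : Ideal R) [p.IsPrime] (M : Type u) [AddCommGroup M]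
    [Module R M] : ℕ∞ :=
  edepth (Localization.AtPrime p) (IsLocalRing.maximalIdeal (Localization.AtPrime p))
    (LocalizedModule p.primeCompl M)

/-- `depth R_p`. -/
def locRingDepth (R : Type u) [CommRing R] (p : Ideal R) [p.IsPrime] : ℕ∞ :=
  rdepth (Localization.AtPrime p)

/-- `Gdim_{R_p}(M_p)`. -/
def locGDim (R : Type u) [CommRing R] (p : Ideal R) [p.IsPrime] (M : Type u) [AddCommGroup M]
    [Module R M] : ℕ∞ :=
  GDim (Localization.AtPrime p) (LocalizedModule p.primeCompl M)

/-- `rgr_{R_p}(M_p)`. -/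
def locRgr (R : Type u) [CommRing R] (p : Ideal R) [p.IsPrime] (M : Type u) [AddCommGroup M]
    [Module R M] : ℕ∞ :=
  rgr (Localization.AtPrime p) (LocalizedModule p.primeCompl M)

/-- `dim_{R_p}(M_p)`, the Krull dimension of the support of `M_p` over `R_p`. -/
def locDim (R : Type u) [CommRing R] (p : Ideal R) [p.IsPrime] (M : Type u) [AddCommGroup M]
    [Module R M] : WithBot ℕ∞ :=
  ringKrullDim ((Localization.AtPrime p) ⧸
    Module.annihilator (Localization.AtPrime p) (LocalizedModule p.primeCompl M))

/-- `M` satisfies the condition `S̃_k`: `depth_{R_p}(M_p) ≥ min{k, depth R_p}` for all primes. -/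
def Stilde (R : Type u) [CommRing R] (k : ℕ) (M : Type u) [AddCommGroup M] [Module R M] : Prop :=
  ∀ (p : Ideal R) (_ : p.IsPrime), min (k : ℕ∞) (locRingDepth R p) ≤ locDepth R p M

/-- `M` satisfies Serre's condition `(S_k)`:
`depth_{R_p}(M_p) ≥ min{k, dim_{R_p}(M_p)}` for all primes. -/
def SerreS (R : Type u) [CommRing R] (k : ℕ) (M : Type u) [AddCommGroup M] [Module R M] : Prop :=
  ∀ (p : Ideal R) (_ : p.IsPrime),
    min (k : WithBot ℕ∞) (locDim R p M) ≤ (locDepth R p M : WithBot ℕ∞)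

/-- `M` is a `k`-th syzygy module. -/
def IsKthSyzygy (R : Type u) [CommRing R] : ℕ → ModuleCat.{u} R → Prop
  | 0, _ => True
  | k + 1, M =>
    ∃ (P : ModuleCat.{u} R) (f : ↥M →ₗ[R] ↥P), Module.Projective R ↥P ∧ Module.Finite R ↥P ∧
      Function.Injective f ∧ IsKthSyzygy R k (ModuleCat.of R (↥P ⧸ LinearMap.range f))

/-- The `I`-torsion submodule `Γ_I(M) = { x | I^n x = 0 for some n }`. -/
def gammaTorsion (R : Type u) [CommRing R] (I : Ideal R) (M : Type u) [AddCommGroup M]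
    [Module R M] : Submodule R M where
  carrier := {x | ∃ n : ℕ, ∀ a ∈ I ^ n, a • x = 0}
  zero_mem' := ⟨0, fun a _ => smul_zero a⟩
  add_mem' := by
    rintro x y ⟨n, hn⟩ ⟨m, hm⟩
    exact ⟨n + m, fun a ha => by
      rw [smul_add, hn a (Ideal.pow_le_pow_right (Nat.le_add_right n m) ha),
        hm a (Ideal.pow_le_pow_right (Nat.le_add_left m n) ha), add_zero]⟩
  smul_mem' := by
    rintro c x ⟨n, hn⟩
    exact ⟨n, fun a ha => by rw [smul_comm, hn a ha, smul_zero]⟩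

/-- `N` has finite flat dimension (characterized by uniform vanishing of `Tor`). -/
def HasFiniteFlatDim (R : Type u) [CommRing R] (N : Type u) [AddCommGroup N] [Module R N] : Prop :=
  ∃ n : ℕ, ∀ i : ℕ, n < i → ∀ (M : ModuleCat.{u} R), Subsingleton (torM R i ↥M N)

/-- `N` has finite injective dimension (characterized by uniform vanishing of `Ext`). -/
def HasFiniteInjDim (R : Type u) [CommRing R] (N : Type u) [AddCommGroup N] [Module R N] : Prop :=
  ∃ n : ℕ, ∀ i : ℕ, n < i → ∀ (M : ModuleCat.{u} R), Subsingleton (extM R i ↥M N)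

/-- `K` is a semidualizing `R`-module. -/
def IsSemidualizing (R : Type u) [CommRing R] (K : Type u) [AddCommGroup K] [Module R K] : Prop :=
  Module.Finite R K ∧ Function.Bijective (LinearMap.lsmul R K) ∧
    ∀ i : ℕ, 0 < i → Subsingleton (extM R i K K)

/-- The biduality map `M → Hom(Hom(M,K),K)`. -/
def evalK (R : Type u) [CommRing R] (K M : Type u) [AddCommGroup K] [Module R K]
    [AddCommGroup M] [Module R M] : M →ₗ[R] ((M →ₗ[R] K) →ₗ[R] K) :=
  LinearMap.applyₗ

/-- `M` has `G_K`-dimension zero. -/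
def IsGKDimZero (R : Type u) [CommRing R] (K M : Type u) [AddCommGroup K] [Module R K]
    [AddCommGroup M] [Module R M] : Prop :=
  Module.Finite R M ∧ Function.Bijective (evalK R K M) ∧
    (∀ i : ℕ, 0 < i → Subsingleton (extM R i M K)) ∧
    (∀ i : ℕ, 0 < i → Subsingleton (extM R i (M →ₗ[R] K) K))

/-- `M` admits a resolution of length `≤ n` by modules of `G_K`-dimension zero. -/
def GKDimLE (R : Type u) [CommRing R] (K : Type u) [AddCommGroup K] [Module R K] :
    ℕ → ModuleCat.{u} R → Prop
  | 0, M => IsGKDimZero R K ↥M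
  | n + 1, M =>
    ∃ (G : ModuleCat.{u} R) (f : ↥G →ₗ[R] ↥M), IsGKDimZero R K ↥G ∧ Function.Surjective f ∧
      GKDimLE R K n (ModuleCat.of R ↥(LinearMap.ker f))

/-- The `G_K`-dimension of `M`. -/
def GKDim (R : Type u) [CommRing R] (K M : Type u) [AddCommGroup K] [Module R K]
    [AddCommGroup M] [Module R M] : ℕ∞ :=
  sInf {n : ℕ∞ | ∃ k : ℕ, n = k ∧ GKDimLE R K k (ModuleCat.of R M)}

/-- The grade of a module, `gr_R(M) = grade(Ann_R(M), R) = inf{i | Ext^i(R/Ann M, R) ≠ 0}`. -/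
def grAnn (R : Type u) [CommRing R] (M : Type u) [AddCommGroup M] [Module R M] : ℕ∞ :=
  egrade R (R ⧸ Module.annihilator R M)

/-- The grade of an ideal, `grade(I) = inf{i | Ext^i(R/I, R) ≠ 0}`. -/
def gradeI (R : Type u) [CommRing R] (I : Ideal R) : ℕ∞ :=
  egrade R (R ⧸ I)

/-- The ideal `I` is `G_K`-Gorenstein: `R/I` is `G_K`-perfect and `Ext^{gr I}(R/I, K)` is
cyclic. -/
def IsGKGorensteinIdeal (R : Type u) [CommRing R] (K : Type u) [AddCommGroup K] [Module R K]
    (I : Ideal R) : Prop :=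
  ∃ n : ℕ, grAnn R (R ⧸ I) = (n : ℕ∞) ∧ GKDim R K (R ⧸ I) = (n : ℕ∞) ∧
    ∃ x : extM R n (R ⧸ I) K, Submodule.span R {x} = ⊤

end


/-!
Let `k` be the residue field and `P → M` a surjection from a finite projective module, so that `λM`
is the cokernel of `M* → P*`. As `M` is torsionless, it is the image of `P** → M**`, and dualizing a
free resolution of `λM` shows the following: if `Ext^i(λM,R) = 0` for `0 < i ≤ s` and
`Ext^i(k,R) = 0` for `i ≤ s + 1`, then `Ext^i(k,M) = 0` for `i ≤ s` and
`Ext^{s+1}(k,M) ≃ Hom(k, Ext^{s+1}(λM,R))`. The condition on `R` is automatic: otherwise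
`depth M ≥ depth R`, and a module of finite G-dimension with this property has G-dimension zero.
Hence `depth M ≥ rgr(λM)`, with equality if and only if the maximal ideal is associated to
`Ext^{rgr(λM)}(λM,R)`. The same holds at every prime `p` with `Gdim M_p ≠ 0`, and such a `p` may be
chosen associated to `Ext^{rgr(λM)}(λM,R)`.
-/

noncomputable section

/-- `Ext^i_R(M,N)` in Mathlib's derived-category model, which comes with Yoneda composition and
long exact sequences; `extMEquivModExt` compares it with the functorial model `extM`. -/
abbrev ModExt (R : Type u) [CommRing R] (M N : Type u) [AddCommGroup M] [Module R M]
    [AddCommGroup N] [Module R N] (i : ℕ) : Type u :=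
  Abelian.Ext (ModuleCat.of R M) (ModuleCat.of R N) i

/-- `0 → M → N → K → 0` is a short exact sequence of modules. -/
structure IsShortExact {R M N K : Type*} [CommRing R] [AddCommGroup M] [Module R M]
    [AddCommGroup N] [Module R N] [AddCommGroup K] [Module R K]
    (f : M →ₗ[R] N) (g : N →ₗ[R] K) : Prop where
  injective : Function.Injective f
  exact : Function.Exact f g
  surjective : Function.Surjective g

/-- The cokernel of `f* : N* → M*`. For a projective cover `ε : P → M` this is a model of `λM`. -/
abbrev DualCoker {R M N : Type*} [CommRing R] [AddCommGroup M] [Module R M] [AddCommGroup N]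
    [Module R N] (f : M →ₗ[R] N) : Type _ :=
  Module.Dual R M ⧸ LinearMap.range f.dualMap

theorem subsingleton_of_exact {R A B C : Type*} [CommRing R] [AddCommGroup A] [Module R A]
    [AddCommGroup B] [Module R B] [AddCommGroup C] [Module R C] {f : A →ₗ[R] B} {g : B →ₗ[R] C}
    (h : Function.Exact f g) [Subsingleton A] [Subsingleton C] : Subsingleton B := by
  refine subsingleton_of_forall_eq 0 fun b => ?_
  obtain ⟨a, rfl⟩ := (h b).1 (Subsingleton.elim _ _)
  rw [Subsingleton.elim a 0, map_zero]

theorem injective_of_exact {R A B C : Type*} [CommRing R] [AddCommGroup A] [Module R A]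
    [AddCommGroup B] [Module R B] [AddCommGroup C] [Module R C] {f : A →ₗ[R] B} {g : B →ₗ[R] C}
    (h : Function.Exact f g) [Subsingleton A] : Function.Injective g :=
  (LinearMap.injective_iff_eq_zero_of_exact h).2 (LinearMap.ext fun a => by
    rw [Subsingleton.elim a 0, map_zero, map_zero])

theorem surjective_of_exact {R A B C : Type*} [CommRing R] [AddCommGroup A] [Module R A]
    [AddCommGroup B] [Module R B] [AddCommGroup C] [Module R C] {f : A →ₗ[R] B} {g : B →ₗ[R] C}
    (h : Function.Exact f g) [Subsingleton C] : Function.Surjective f :=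
  fun b => (h b).1 (Subsingleton.elim _ _)

section Ext

variable {R : Type u} [CommRing R] {M N K X Y : Type u} [AddCommGroup M] [Module R M]
  [AddCommGroup N] [Module R N] [AddCommGroup K] [Module R K]
  [AddCommGroup X] [Module R X] [AddCommGroup Y] [Module R Y]

namespace ModExt

open Abelian

/-- `Ext^0(M,N) ≃ Hom(M,N)`. -/
def homEquiv (M N : Type u) [AddCommGroup M] [Module R M] [AddCommGroup N] [Module R N] :
    ModExt R M N 0 ≃ₗ[R] (M →ₗ[R] N) :=
  Ext.linearEquiv₀.trans ModuleCat.homLinearEquiv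

theorem homEquiv_symm_apply (f : M →ₗ[R] N) :
    (homEquiv M N).symm f = Ext.mk₀ (ModuleCat.ofHom f) := rfl

/-- `Ext^i(X,-)` on morphisms, as a linear function of the morphism. -/
def postcomp (X : Type u) [AddCommGroup X] [Module R X] (i : ℕ) :
    (M →ₗ[R] N) →ₗ[R] ModExt R X M i →ₗ[R] ModExt R X N i :=
  (Ext.bilinearCompOfLinear R _ _ _ i 0 i (add_zero i)).flip ∘ₗ
    (homEquiv M N).symm.toLinearMap

/-- `Ext^i(-,Y)` on morphisms, as a linear function of the morphism. -/
def precomp (Y : Type u) [AddCommGroup Y] [Module R Y] (i : ℕ) :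
    (M →ₗ[R] N) →ₗ[R] ModExt R N Y i →ₗ[R] ModExt R M Y i :=
  Ext.bilinearCompOfLinear R _ _ _ 0 i i (zero_add i) ∘ₗ
    (homEquiv M N).symm.toLinearMap

theorem postcomp_apply (i : ℕ) (f : M →ₗ[R] N) (x : ModExt R X M i) :
    postcomp X i f x = x.comp (Ext.mk₀ (ModuleCat.ofHom f)) (add_zero i) := rfl

theorem precomp_apply (i : ℕ) (f : M →ₗ[R] N) (x : ModExt R N Y i) :
    precomp Y i f x = (Ext.mk₀ (ModuleCat.ofHom f)).comp x (zero_add i) := rfl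

theorem postcomp_postcomp (i : ℕ) (f : M →ₗ[R] N) (g : N →ₗ[R] K) (x : ModExt R X M i) :
    postcomp X i g (postcomp X i f x) = postcomp X i (g ∘ₗ f) x := by
  simp [postcomp_apply, ModuleCat.ofHom_comp]

theorem precomp_precomp (i : ℕ) (f : M →ₗ[R] N) (g : N →ₗ[R] K) (x : ModExt R K Y i) :
    precomp Y i f (precomp Y i g x) = precomp Y i (g ∘ₗ f) x := by
  simp [precomp_apply, ModuleCat.ofHom_comp]

theorem postcomp_id (i : ℕ) (x : ModExt R X M i) : postcomp X i LinearMap.id x = x := by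
  simp [postcomp_apply]

theorem precomp_id (i : ℕ) (x : ModExt R M Y i) : precomp Y i LinearMap.id x = x := by
  simp [precomp_apply]

/-- `Ext^i(X,M) ≃ Ext^i(X,N)` induced by `M ≃ N`. -/
def postcompEquiv (X : Type u) [AddCommGroup X] [Module R X] (i : ℕ) (e : M ≃ₗ[R] N) :
    ModExt R X M i ≃ₗ[R] ModExt R X N i :=
  LinearEquiv.ofLinearMap (postcomp X i e.toLinearMap) (postcomp X i e.symm.toLinearMap)
    (by ext x; simp [postcomp_postcomp, postcomp_id])
    (by ext x; simp [postcomp_postcomp, postcomp_id])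

/-- `Ext^i(N,Y) ≃ Ext^i(M,Y)` induced by `M ≃ N`. -/
def precompEquiv (Y : Type u) [AddCommGroup Y] [Module R Y] (i : ℕ) (e : M ≃ₗ[R] N) :
    ModExt R N Y i ≃ₗ[R] ModExt R M Y i :=
  LinearEquiv.ofLinearMap (precomp Y i e.toLinearMap) (precomp Y i e.symm.toLinearMap)
    (by ext x; simp [precomp_precomp, precomp_id])
    (by ext x; simp [precomp_precomp, precomp_id])

theorem homEquiv_postcomp (f : M →ₗ[R] N) (x : ModExt R X M 0) :
    homEquiv X N (postcomp X 0 f x) = f ∘ₗ homEquiv X M x := by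
  obtain ⟨g, rfl⟩ := (homEquiv X M).symm.surjective x
  rw [LinearEquiv.apply_symm_apply, ← LinearEquiv.eq_symm_apply, homEquiv_symm_apply,
    homEquiv_symm_apply, postcomp_apply, Ext.mk₀_comp_mk₀, ModuleCat.ofHom_comp]

theorem precomp_homEquiv_symm (f : M →ₗ[R] N) (g : N →ₗ[R] Y) :
    precomp Y 0 f ((homEquiv N Y).symm g) = (homEquiv M Y).symm (g ∘ₗ f) := by
  rw [homEquiv_symm_apply, homEquiv_symm_apply, precomp_apply, Ext.mk₀_comp_mk₀,
    ModuleCat.ofHom_comp]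

theorem postcomp_zero_injective {f : M →ₗ[R] N} (hf : Function.Injective f) :
    Function.Injective (postcomp X 0 f) := fun x y hxy => by
  refine (homEquiv X M).injective (LinearMap.ext fun z => hf ?_)
  have hcomp := congrArg (homEquiv X N) hxy
  rw [homEquiv_postcomp, homEquiv_postcomp] at hcomp
  exact LinearMap.congr_fun hcomp z

theorem subsingleton_of_projective (M Y : Type u) [AddCommGroup M] [Module R M]
    [AddCommGroup Y] [Module R Y] [Module.Projective R M] (i : ℕ) :
    Subsingleton (ModExt R M Y (i + 1)) :=
  have : Projective (ModuleCat.of R M) := ModuleCat.projective_of_categoryTheory_projective _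
  subsingleton_of_forall_eq 0 Ext.eq_zero_of_projective

theorem subsingleton_postcomp_of_retract {i : ℕ} {s : M →ₗ[R] N} {r : N →ₗ[R] M}
    (hrs : r ∘ₗ s = LinearMap.id) [Subsingleton (ModExt R X N i)] :
    Subsingleton (ModExt R X M i) :=
  Function.Injective.subsingleton (f := postcomp X i s) <|
    Function.LeftInverse.injective (g := postcomp X i r) fun x => by
      rw [postcomp_postcomp, hrs, postcomp_id]

theorem subsingleton_pi {i n : ℕ} [Subsingleton (ModExt R X M i)] :
    Subsingleton (ModExt R X (Fin n → M) i) := by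
  refine subsingleton_of_forall_eq 0 fun x => ?_
  have hid : ∑ j : Fin n, LinearMap.single R (fun _ => M) j ∘ₗ LinearMap.proj j =
      (LinearMap.id : (Fin n → M) →ₗ[R] _) :=
    LinearMap.ext fun v => by simp [Finset.univ_sum_single]
  rw [← postcomp_id i x, ← hid, map_sum, LinearMap.sum_apply]
  refine Finset.sum_eq_zero fun j _ => ?_
  rw [← postcomp_postcomp, Subsingleton.elim (postcomp X i (LinearMap.proj j) x) 0, map_zero]

theorem subsingleton_of_finite_projective (i : ℕ) (P : Type u) [AddCommGroup P] [Module R P]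
    [Module.Finite R P] [Module.Projective R P] [Subsingleton (ModExt R X R i)] :
    Subsingleton (ModExt R X P i) := by
  obtain ⟨n, r, s, -, -, hrs⟩ := Module.Finite.exists_comp_eq_id_of_projective R P
  have := subsingleton_pi (R := R) (X := X) (M := R) (i := i) (n := n)
  exact subsingleton_postcomp_of_retract hrs

theorem smul_eq_zero_of_mem {I : Ideal R} {r : R} (hr : r ∈ I) (i : ℕ)
    (x : ModExt R (R ⧸ I) Y i) : r • x = 0 := by
  have hid : r • (LinearMap.id : (R ⧸ I) →ₗ[R] R ⧸ I) = 0 := by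
    ext
    simpa [Algebra.smul_def, Ideal.Quotient.eq_zero_iff_mem] using hr
  rw [← precomp_id i x, ← LinearMap.smul_apply, ← map_smul, hid, map_zero, LinearMap.zero_apply]

end ModExt

namespace IsShortExact

open Abelian ModExt

theorem of_surjective {g : N →ₗ[R] K} (hg : Function.Surjective g) :
    IsShortExact (LinearMap.ker g).subtype g :=
  ⟨Subtype.val_injective, LinearMap.exact_subtype_ker_map g, hg⟩

theorem of_injective {f : M →ₗ[R] N} (hf : Function.Injective f) :
    IsShortExact f (LinearMap.range f).mkQ :=
  ⟨hf, LinearMap.exact_map_mkQ_range f, Submodule.mkQ_surjective _⟩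

theorem of_submodule (L : Submodule R N) : IsShortExact L.subtype L.mkQ :=
  ⟨L.injective_subtype, LinearMap.exact_subtype_mkQ L, L.mkQ_surjective⟩

variable {f : M →ₗ[R] N} {g : N →ₗ[R] K}

theorem comp_eq_zero (h : IsShortExact f g) : g ∘ₗ f = 0 := h.exact.linearMap_comp_eq_zero

theorem shortExact (h : IsShortExact f g) :
    (ModuleCat.shortComplexOfCompEqZero f g h.comp_eq_zero).ShortExact :=
  ModuleCat.shortComplex_shortExact _ h.exact h.injective h.surjective

/-- The connecting map `Ext^i(X,K) → Ext^{i+1}(X,M)`. -/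
def covariantδ (h : IsShortExact f g) (X : Type u) [AddCommGroup X] [Module R X] (i : ℕ) :
    ModExt R X K i →ₗ[R] ModExt R X M (i + 1) :=
  h.shortExact.extClass.postcompOfLinear R _ rfl

/-- The connecting map `Ext^i(M,Y) → Ext^{i+1}(K,Y)`. -/
def contravariantδ (h : IsShortExact f g) (Y : Type u) [AddCommGroup Y] [Module R Y] (i : ℕ) :
    ModExt R M Y i →ₗ[R] ModExt R K Y (i + 1) :=
  h.shortExact.extClass.precompOfLinear R _ (add_comm 1 i)

theorem exact_postcomp (h : IsShortExact f g) (X : Type u) [AddCommGroup X] [Module R X] (i : ℕ) :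
    Function.Exact (postcomp X i f) (postcomp X i g) := by
  refine fun x => ⟨Ext.covariant_sequence_exact₂ _ h.shortExact x, ?_⟩
  rintro ⟨y, rfl⟩
  rw [postcomp_postcomp, h.comp_eq_zero, map_zero, LinearMap.zero_apply]

theorem exact_postcomp_covariantδ (h : IsShortExact f g) (X : Type u) [AddCommGroup X]
    [Module R X] (i : ℕ) : Function.Exact (postcomp X i g) (h.covariantδ X i) := by
  refine fun x => ⟨Ext.covariant_sequence_exact₃ _ h.shortExact x rfl, ?_⟩
  rintro ⟨y, rfl⟩
  change (y.comp (Ext.mk₀ (ModuleCat.ofHom g)) (add_zero i)).comp h.shortExact.extClass rfl = 0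
  rw [Ext.comp_assoc_of_second_deg_zero, h.shortExact.comp_extClass, Ext.comp_zero]

theorem exact_covariantδ_postcomp (h : IsShortExact f g) (X : Type u) [AddCommGroup X]
    [Module R X] (i : ℕ) : Function.Exact (h.covariantδ X i) (postcomp X (i + 1) f) := by
  refine fun x => ⟨fun hx => Ext.covariant_sequence_exact₁ _ h.shortExact x hx rfl, ?_⟩
  rintro ⟨y, rfl⟩
  change (y.comp h.shortExact.extClass rfl).comp (Ext.mk₀ (ModuleCat.ofHom f)) (add_zero _) = 0
  rw [Ext.comp_assoc_of_third_deg_zero, h.shortExact.extClass_comp, Ext.comp_zero]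

theorem exact_precomp_contravariantδ (h : IsShortExact f g) (Y : Type u) [AddCommGroup Y]
    [Module R Y] (i : ℕ) : Function.Exact (precomp Y i f) (h.contravariantδ Y i) := by
  refine fun x =>
    ⟨Ext.contravariant_sequence_exact₁ h.shortExact _ x (add_comm 1 i), ?_⟩
  rintro ⟨y, rfl⟩
  exact h.shortExact.extClass_comp_assoc y (h := add_comm 1 i)

theorem exact_contravariantδ_precomp (h : IsShortExact f g) (Y : Type u) [AddCommGroup Y]
    [Module R Y] (i : ℕ) : Function.Exact (h.contravariantδ Y i) (precomp Y (i + 1) g) := by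
  refine fun x =>
    ⟨fun hx => Ext.contravariant_sequence_exact₃ h.shortExact _ x hx (add_comm 1 i), ?_⟩
  rintro ⟨y, rfl⟩
  exact h.shortExact.comp_extClass_assoc y (add_comm 1 i)

/-- Dimension shift in the second argument. -/
def covariantShift (h : IsShortExact f g) (X : Type u) [AddCommGroup X] [Module R X] (i : ℕ)
    [Subsingleton (ModExt R X N i)] [Subsingleton (ModExt R X N (i + 1))] :
    ModExt R X K i ≃ₗ[R] ModExt R X M (i + 1) :=
  LinearEquiv.ofBijective (h.covariantδ X i)
    ⟨injective_of_exact (h.exact_postcomp_covariantδ X i),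
      surjective_of_exact (h.exact_covariantδ_postcomp X i)⟩

/-- Dimension shift in the first argument. -/
def contravariantShift (h : IsShortExact f g) (Y : Type u) [AddCommGroup Y] [Module R Y] (i : ℕ)
    [Subsingleton (ModExt R N Y i)] [Subsingleton (ModExt R N Y (i + 1))] :
    ModExt R M Y i ≃ₗ[R] ModExt R K Y (i + 1) :=
  LinearEquiv.ofBijective (h.contravariantδ Y i)
    ⟨injective_of_exact (h.exact_precomp_contravariantδ Y i),
      surjective_of_exact (h.exact_contravariantδ_precomp Y i)⟩

theorem postcomp_succ_injective (h : IsShortExact f g) (i : ℕ) [Subsingleton (ModExt R X K i)] :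
    Function.Injective (postcomp X (i + 1) f) :=
  injective_of_exact (h.exact_covariantδ_postcomp X i)

theorem subsingleton_left (h : IsShortExact f g) (i : ℕ) [Subsingleton (ModExt R X K i)]
    [Subsingleton (ModExt R X N (i + 1))] : Subsingleton (ModExt R X M (i + 1)) :=
  h.postcomp_succ_injective i |>.subsingleton

theorem exact_dualMap_contravariantδ (h : IsShortExact f g) :
    Function.Exact f.dualMap (h.contravariantδ R 0 ∘ₗ (homEquiv M R).symm.toLinearMap) := by
  refine fun φ => (h.exact_precomp_contravariantδ R 0 _).trans ?_
  refine (homEquiv N R).symm.surjective.exists.trans (exists_congr fun ψ => ?_)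
  rw [precomp_homEquiv_symm]
  exact (homEquiv M R).symm.injective.eq_iff

/-- `Ext¹(K,R)` is the cokernel of `N* → M*` when `Ext¹(N,R) = 0`. -/
def dualCokerEquivExtOne (h : IsShortExact f g) [Subsingleton (ModExt R N R 1)] :
    DualCoker f ≃ₗ[R] ModExt R K R 1 :=
  h.exact_dualMap_contravariantδ.linearEquivOfSurjective <|
    (surjective_of_exact (h.exact_contravariantδ_precomp R 0)).comp
      (homEquiv M R).symm.surjective

end IsShortExact

end Ext

section Comparison

variable {R : Type u} [CommRing R]

namespace ModExt

open Abelian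

variable {X : ModuleCat.{u} R} (P : ProjectiveResolution X) (Y : ModuleCat.{u} R)

theorem extMk_degree_zero_eq_zero_iff (f : P.complex.X 0 ⟶ Y) (hf : P.complex.d 1 0 ≫ f = 0) :
    P.extMk f 1 rfl hf = 0 ↔ f = 0 := by
  refine ⟨fun h => ?_, ?_⟩
  · rw [← P.extEquivCohomologyClass.apply_eq_iff_eq, P.extEquivCohomologyClass_extMk,
      P.extEquivCohomologyClass_zero, CochainComplex.HomComplex.CohomologyClass.mk_eq_zero_iff,
      CochainComplex.HomComplex.Cocycle.toSingleMk_mem_coboundaries_iff _ _ _ _ _ 1 (by simp)] at h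
    obtain ⟨g, hg⟩ := h
    have hX : Limits.IsZero (P.cochainComplex.X 1) :=
      P.cochainComplex.isZero_of_isStrictlyLE 0 1 (by simp)
    rw [hX.eq_of_tgt (P.cochainComplex.d _ 1) 0, Limits.zero_comp] at hg
    exact (cancel_epi _).1 (hg.symm.trans Limits.comp_zero.symm)
  · rintro rfl
    exact P.extMk_zero 1 rfl

/-- The class in `Ext^n(X,Y)` of an `n`-cocycle of `Hom(P,Y)`. -/
def cocycleClass (n : ℕ) :
    LinearMap.ker ((P.complex.linearYonedaObj R Y).d n (n + 1)).hom →ₗ[R] Ext X Y n where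
  toFun x := P.extMk (Y := Y) x.1 (n + 1) rfl x.2
  map_add' a b := (P.add_extMk _ _ _ rfl a.2 b.2).symm
  map_smul' r a := by
    rw [RingHom.id_apply, Ext.smul_eq_comp_mk₀]
    refine Eq.trans ?_ (P.extMk_comp_mk₀ (Y := Y) a.1 (n + 1) rfl a.2 (r • 𝟙 Y)).symm
    congr 1

theorem cocycleClass_surjective (n : ℕ) : Function.Surjective (cocycleClass P Y n) := fun α => by
  obtain ⟨f, hf, rfl⟩ := P.extMk_surjective α (n + 1) rfl
  exact ⟨⟨f, hf⟩, rfl⟩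

theorem cocycleClass_eq_zero_iff (n : ℕ)
    (x : LinearMap.ker ((P.complex.linearYonedaObj R Y).d n (n + 1)).hom) :
    cocycleClass P Y n x = 0 ↔
      ∃ y, ((P.complex.linearYonedaObj R Y).d ((ComplexShape.up ℕ).prev n) n).hom y = x.1 := by
  cases n with
  | zero =>
    have hd : (P.complex.linearYonedaObj R Y).d ((ComplexShape.up ℕ).prev 0) 0 = 0 :=
      HomologicalComplex.shape _ _ _ (by simp)
    rw [hd]
    refine (extMk_degree_zero_eq_zero_iff P Y _ x.2).trans ⟨fun h => ⟨0, h.symm⟩, ?_⟩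
    rintro ⟨y, hy⟩
    exact hy.symm
  | succ n =>
    rw [CochainComplex.prev_nat_succ]
    exact P.extMk_eq_zero_iff _ _ rfl x.2 n rfl

end ModExt

/-- The two models of `Ext` agree: both are computed by a projective resolution. -/
def extMEquivModExt (n : ℕ) (M N : Type u) [AddCommGroup M] [Module R M]
    [AddCommGroup N] [Module R N] : extM R n M N ≃ₗ[R] ModExt R M N n :=
  let P := ProjectiveResolution.of (ModuleCat.of R M)
  let C := P.complex.linearYonedaObj R (ModuleCat.of R N)
  let S := C.sc' ((ComplexShape.up ℕ).prev n) n (n + 1)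
  have hexact : Function.Exact S.moduleCatToCycles (ModExt.cocycleClass P (ModuleCat.of R N) n) :=
    fun x => (ModExt.cocycleClass_eq_zero_iff P _ n x).trans
      (exists_congr fun y => (Subtype.ext_iff (a1 := S.moduleCatToCycles y)).symm)
  (P.isoExt (R := R) n _ ≪≫ C.homologyIsoSc' _ n (n + 1) rfl (by simp) ≪≫
      S.moduleCatHomologyIso).toLinearEquiv.trans
    (hexact.linearEquivOfSurjective (ModExt.cocycleClass_surjective P _ n))

theorem subsingleton_extM_iff (n : ℕ) (M N : Type u) [AddCommGroup M] [Module R M]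
    [AddCommGroup N] [Module R N] :
    Subsingleton (extM R n M N) ↔ Subsingleton (ModExt R M N n) :=
  (extMEquivModExt n M N).toEquiv.subsingleton_congr

end Comparison

section Dual

variable {R : Type u} [CommRing R] {K F X Y : Type u} [AddCommGroup K] [Module R K]
  [AddCommGroup F] [Module R F] [AddCommGroup X] [Module R X] [AddCommGroup Y] [Module R Y]
  {f : K →ₗ[R] F} {g : F →ₗ[R] Y}

namespace IsShortExact

open ModExt

theorem exact_dualMap (h : IsShortExact f g) : Function.Exact g.dualMap f.dualMap :=
  LinearMap.exact_lcomp_of_exact_of_surjective R h.exact h.surjective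

theorem dualMap_rangeRestrict (h : IsShortExact f g) :
    IsShortExact (K := LinearMap.range f.dualMap) g.dualMap f.dualMap.rangeRestrict :=
  ⟨LinearMap.dualMap_injective_of_surjective h.surjective,
    fun φ => Subtype.ext_iff.trans (h.exact_dualMap φ),
    LinearMap.surjective_rangeRestrict _⟩

theorem dualMap_surjective_iff (h : IsShortExact f g) [Subsingleton (ModExt R F R 1)] :
    Function.Surjective f.dualMap ↔ Subsingleton (ModExt R Y R 1) := by
  rw [← h.dualCokerEquivExtOne.toEquiv.subsingleton_congr, Submodule.Quotient.subsingleton_iff,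
    LinearMap.range_eq_top]

/-- `Ext^{i+1}(K,Z) ≃ Ext^{i+2}(Y,Z)` for the first syzygy `K` of `Y`. -/
def syzygyShift (h : IsShortExact f g) [Module.Projective R F] (Z : Type u) [AddCommGroup Z]
    [Module R Z] (i : ℕ) : ModExt R K Z (i + 1) ≃ₗ[R] ModExt R Y Z (i + 2) :=
  have := subsingleton_of_projective (R := R) F Z i
  have := subsingleton_of_projective (R := R) F Z (i + 1)
  h.contravariantShift Z (i + 1)

end IsShortExact

namespace ModExt

theorem subsingleton_dual_zero (X Y : Type u) [AddCommGroup X] [Module R X] [AddCommGroup Y]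
    [Module R Y] [Module.Finite R Y] [Subsingleton (ModExt R X R 0)] :
    Subsingleton (ModExt R X (Module.Dual R Y) 0) := by
  obtain ⟨n, π, hπ⟩ := Module.Finite.exists_fin' R Y
  have := subsingleton_of_finite_projective (R := R) (X := X) 0 (Module.Dual R (Fin n → R))
  exact (postcomp_zero_injective (LinearMap.dualMap_injective_of_surjective hπ)).subsingleton

end ModExt

namespace IsShortExact

open ModExt

variable [Module.Finite R F] [Module.Projective R F]

theorem subsingleton_dual_succ (h : IsShortExact f g) (i : ℕ)
    [Subsingleton (ModExt R X R (i + 1))]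
    [Subsingleton (ModExt R X (LinearMap.range f.dualMap) i)] :
    Subsingleton (ModExt R X (Module.Dual R Y) (i + 1)) :=
  have := subsingleton_of_finite_projective (R := R) (X := X) (i + 1) (Module.Dual R F)
  h.dualMap_rangeRestrict.subsingleton_left i

theorem subsingleton_range_dualMap [IsNoetherianRing R] (h : IsShortExact f g) (i : ℕ)
    (hY : ∀ j < i, Subsingleton (ModExt R Y R (j + 1)))
    (hX : ∀ j ≤ i, Subsingleton (ModExt R X R j)) :
    Subsingleton (ModExt R X (LinearMap.range f.dualMap) i) := by
  have : Module.Finite R K := Module.Finite.of_injective f h.injective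
  induction i generalizing K F Y with
  | zero =>
    have := hX 0 le_rfl
    have := subsingleton_dual_zero (R := R) X K
    exact (postcomp_zero_injective (Submodule.injective_subtype _)).subsingleton
  | succ i ih =>
    obtain ⟨n, π, hπ⟩ := Module.Finite.exists_fin' R K
    have := hX (i + 1) le_rfl
    have := subsingleton_of_projective (R := R) F R 0
    have hsurj := h.dualMap_surjective_iff.2 (hY 0 i.succ_pos)
    have := ih (IsShortExact.of_surjective hπ)
      (fun j hj => (h.syzygyShift R j).toEquiv.subsingleton_congr.2 (hY (j + 1) (by omega)))
      (fun j hj => hX j (by omega)) inferInstance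
    have := (IsShortExact.of_surjective hπ).subsingleton_dual_succ (X := X) i
    exact (postcompEquiv X (i + 1)
      (LinearEquiv.ofTop _ (LinearMap.range_eq_top.2 hsurj))).toEquiv.subsingleton

theorem nonempty_range_dualMap_equiv [IsNoetherianRing R] (h : IsShortExact f g) (n : ℕ)
    (hY : ∀ j < n, Subsingleton (ModExt R Y R (j + 1)))
    (hX : ∀ j ≤ n + 1, Subsingleton (ModExt R X R j)) :
    Nonempty (ModExt R X (LinearMap.range f.dualMap) (n + 1) ≃ₗ[R]
      (X →ₗ[R] ModExt R Y R (n + 1))) := by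
  have : Module.Finite R K := Module.Finite.of_injective f h.injective
  induction n generalizing K F Y with
  | zero =>
    obtain ⟨a, π, hπ⟩ := Module.Finite.exists_fin' R K
    have hπ := IsShortExact.of_surjective hπ
    have := hX 0 (by omega)
    have := hX 1 le_rfl
    have := subsingleton_of_projective (R := R) F R 0
    have := subsingleton_dual_zero (R := R) X K
    have := hπ.subsingleton_range_dualMap (X := X) 0 (by omega) (fun j hj => hX j (by omega))
    have := hπ.subsingleton_dual_succ (X := X) 0
    exact ⟨((IsShortExact.of_submodule (LinearMap.range f.dualMap)).covariantShift X 0).symm ≪≫ₗ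
      homEquiv X _ ≪≫ₗ LinearEquiv.congrRight h.dualCokerEquivExtOne⟩
  | succ n ih =>
    obtain ⟨a, π, hπ⟩ := Module.Finite.exists_fin' R K
    have hπ := IsShortExact.of_surjective hπ
    have := hX (n + 1) (by omega)
    have := hX (n + 2) le_rfl
    have := subsingleton_of_projective (R := R) F R 0
    have hsurj := h.dualMap_surjective_iff.2 (hY 0 n.succ_pos)
    have := subsingleton_of_finite_projective (R := R) (X := X) (n + 1)
      (Module.Dual R (Fin a → R))
    have := subsingleton_of_finite_projective (R := R) (X := X) (n + 2)
      (Module.Dual R (Fin a → R))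
    obtain ⟨e⟩ := ih hπ
      (fun j hj => (h.syzygyShift R j).toEquiv.subsingleton_congr.2 (hY (j + 1) (by omega)))
      (fun j hj => hX j (by omega)) inferInstance
    exact ⟨postcompEquiv X (n + 2) (LinearEquiv.ofTop _ (LinearMap.range_eq_top.2 hsurj)) ≪≫ₗ
      (hπ.dualMap_rangeRestrict.covariantShift X (n + 1)).symm ≪≫ₗ e ≪≫ₗ
      LinearEquiv.congrRight (h.syzygyShift R n)⟩

end IsShortExact

end Dual

theorem natCast_le_sInf_iff {p : ℕ → Prop} {n : ℕ} :
    (n : ℕ∞) ≤ sInf {m : ℕ∞ | ∃ k : ℕ, m = k ∧ p k} ↔ ∀ i < n, ¬p i := by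
  rw [le_sInf_iff]
  constructor
  · exact fun h i hi hp => hi.not_ge (Nat.cast_le.1 (h _ ⟨i, rfl, hp⟩))
  · rintro h _ ⟨k, rfl, hp⟩
    exact Nat.cast_le.2 (not_lt.1 fun hk => h k hk hp)

theorem sInf_eq_natCast_iff {p : ℕ → Prop} {n : ℕ} :
    sInf {m : ℕ∞ | ∃ k : ℕ, m = k ∧ p k} = n ↔ p n ∧ ∀ i < n, ¬p i := by
  rw [eq_comm, eq_iff_le_not_lt, ← ENat.add_one_le_iff (ENat.natCast_ne_top n), ← Nat.cast_add_one,
    natCast_le_sInf_iff, natCast_le_sInf_iff]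
  grind

section Invariants

variable {R : Type u} [CommRing R] {M : Type u} [AddCommGroup M] [Module R M]

theorem natCast_le_edepth_iff {I : Ideal R} {n : ℕ} :
    (n : ℕ∞) ≤ edepth R I M ↔ ∀ i < n, Subsingleton (ModExt R (R ⧸ I) M i) := by
  simp only [edepth, natCast_le_sInf_iff, subsingleton_extM_iff, not_not]

theorem edepth_eq_natCast_iff {I : Ideal R} {n : ℕ} :
    edepth R I M = n ↔ ¬Subsingleton (ModExt R (R ⧸ I) M n) ∧
      ∀ i < n, Subsingleton (ModExt R (R ⧸ I) M i) := by
  simp only [edepth, sInf_eq_natCast_iff, subsingleton_extM_iff, not_not]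

theorem exists_eq_add_one_of_rgr_eq_natCast {n : ℕ} (h : rgr R M = n) :
    ∃ s, n = s + 1 ∧ ¬Subsingleton (ModExt R M R (s + 1)) ∧
      ∀ i < s, Subsingleton (ModExt R M R (i + 1)) := by
  simp only [rgr, sInf_eq_natCast_iff, subsingleton_extM_iff] at h
  obtain ⟨⟨hpos, hn⟩, hlt⟩ := h
  obtain ⟨s, rfl⟩ := Nat.exists_eq_add_one.2 hpos
  exact ⟨s, rfl, hn, fun i hi => by simpa using hlt (i + 1) (by omega)⟩

theorem GDim_eq_zero_iff : GDim R M = 0 ↔ IsGDimZero R M := by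
  rw [GDim, ← Nat.cast_zero, sInf_eq_natCast_iff]
  exact and_iff_left fun i hi => absurd hi i.not_lt_zero

theorem exists_GDimLE_of_GDim_lt_top (h : GDim R M < ⊤) :
    ∃ n, GDimLE R n (ModuleCat.of R M) := by
  obtain ⟨_, ⟨n, -, hn⟩, -⟩ := sInf_lt_iff.1 h
  exact ⟨n, hn⟩

theorem isGDimZero_iff : IsGDimZero R M ↔
    Module.Finite R M ∧ Function.Bijective (Module.Dual.eval R M) ∧
      (∀ i, Subsingleton (ModExt R M R (i + 1))) ∧
      ∀ i, Subsingleton (ModExt R (Module.Dual R M) R (i + 1)) := by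
  have pos_iff (p : ℕ → Prop) : (∀ i, 0 < i → p i) ↔ ∀ i, p (i + 1) :=
    ⟨fun h i => h _ i.succ_pos, fun h i hi => Nat.sub_add_cancel hi ▸ h (i - 1)⟩
  simp only [IsGDimZero, subsingleton_extM_iff, pos_iff]

end Invariants

section DualHom

variable {R : Type u} [CommRing R] {K F X Y Z : Type u} [AddCommGroup K] [Module R K]
  [AddCommGroup F] [Module R F] [AddCommGroup X] [Module R X] [AddCommGroup Y] [Module R Y]
  [AddCommGroup Z] [Module R Z] {f : K →ₗ[R] F} {g : F →ₗ[R] Y}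

theorem IsShortExact.dual (h : IsShortExact f g) (hf : Function.Surjective f.dualMap) :
    IsShortExact g.dualMap f.dualMap :=
  ⟨LinearMap.dualMap_injective_of_surjective h.surjective, h.exact_dualMap, hf⟩

theorem IsShortExact.postcomp_dualMap_injective [IsNoetherianRing R] [Module.Finite R F]
    [Module.Projective R F] (h : IsShortExact f g) {d : ℕ}
    (hX : ∀ i < d, Subsingleton (ModExt R X R i)) (hY : ∀ i, Subsingleton (ModExt R Y R (i + 1))) :
    Function.Injective (ModExt.postcomp X d g.dualMap) := by
  cases d with
  | zero =>
    exact ModExt.postcomp_zero_injective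
      (LinearMap.dualMap_injective_of_surjective h.surjective)
  | succ d =>
    have := h.subsingleton_range_dualMap (X := X) d (fun j _ => hY j) (fun j hj => hX j (by omega))
    exact h.dualMap_rangeRestrict.postcomp_succ_injective d

namespace ModExt

/-- The natural map `Ext^d(X,Y*) → Hom(Y, Ext^d(X,R))`, evaluating the second argument at `y`. -/
def dualHom (X Y : Type u) [AddCommGroup X] [Module R X] [AddCommGroup Y] [Module R Y] (d : ℕ) :
    ModExt R X (Module.Dual R Y) d →ₗ[R] Y →ₗ[R] ModExt R X R d :=
  (postcomp X d ∘ₗ Module.Dual.eval R Y).flip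

theorem dualHom_apply (d : ℕ) (x : ModExt R X (Module.Dual R Y) d) (y : Y) :
    dualHom X Y d x y = postcomp X d (Module.Dual.eval R Y y) x := rfl

theorem dualHom_postcomp_dualMap (d : ℕ) (a : Y →ₗ[R] Z) (x : ModExt R X (Module.Dual R Z) d) :
    dualHom X Y d (postcomp X d a.dualMap x) = dualHom X Z d x ∘ₗ a :=
  LinearMap.ext fun y => postcomp_postcomp d a.dualMap (Module.Dual.eval R Y y) x

theorem dualHom_pi_injective (d n : ℕ) : Function.Injective (dualHom (R := R) X (Fin n → R) d) := by
  refine (injective_iff_map_eq_zero _).2 fun x hx => ?_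
  have hid : ∑ j : Fin n, LinearMap.toSpanSingleton R (Module.Dual R (Fin n → R))
      (LinearMap.proj j) ∘ₗ Module.Dual.eval R (Fin n → R) (Pi.single j 1) = LinearMap.id := by
    ext φ i
    simp [Pi.single_apply]
  rw [← postcomp_id d x, ← hid, map_sum, LinearMap.sum_apply]
  refine Finset.sum_eq_zero fun j _ => ?_
  rw [← postcomp_postcomp, ← dualHom_apply, hx, LinearMap.zero_apply, map_zero]

theorem dualHom_pi_surjective (d n : ℕ) :
    Function.Surjective (dualHom (R := R) X (Fin n → R) d) := fun ψ => by
  refine ⟨∑ j, postcomp X d (LinearMap.toSpanSingleton R _ (LinearMap.proj j))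
    (ψ (Pi.single j 1)), LinearMap.pi_ext' fun i => LinearMap.ext_ring ?_⟩
  have heval (j : Fin n) : Module.Dual.eval R (Fin n → R) (Pi.single i 1) ∘ₗ
      LinearMap.toSpanSingleton R _ (LinearMap.proj j) =
        if i = j then LinearMap.id else 0 := by
    ext
    split <;> simp [*, eq_comm]
  simp only [map_sum, LinearMap.sum_apply, LinearMap.comp_apply, LinearMap.single_apply,
    dualHom_apply, postcomp_postcomp, heval]
  rw [Finset.sum_eq_single i (fun j _ hj => by simp [hj.symm]) (by simp), if_pos rfl, postcomp_id]

variable [IsNoetherianRing R] [Module.Finite R Y] {d : ℕ}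

theorem subsingleton_dual {i : ℕ} (hX : ∀ j ≤ i, Subsingleton (ModExt R X R j))
    (hY : ∀ j, Subsingleton (ModExt R Y R (j + 1))) :
    Subsingleton (ModExt R X (Module.Dual R Y) i) := by
  have := hX i le_rfl
  cases i with
  | zero => exact subsingleton_dual_zero X Y
  | succ i =>
    obtain ⟨n, π, hπ⟩ := Module.Finite.exists_fin' R Y
    have h := IsShortExact.of_surjective hπ
    have := h.subsingleton_range_dualMap (X := X) i (fun j _ => hY j) fun j hj => hX j (by omega)
    exact h.subsingleton_dual_succ i

theorem dualHom_injective (hX : ∀ i < d, Subsingleton (ModExt R X R i))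
    (hY : ∀ i, Subsingleton (ModExt R Y R (i + 1))) :
    Function.Injective (dualHom (R := R) X Y d) := by
  refine (injective_iff_map_eq_zero _).2 fun x hx => ?_
  obtain ⟨n, π, hπ⟩ := Module.Finite.exists_fin' R Y
  apply (IsShortExact.of_surjective hπ).postcomp_dualMap_injective hX hY
  apply dualHom_pi_injective
  rw [dualHom_postcomp_dualMap, hx, LinearMap.zero_comp, map_zero, map_zero]

theorem dualHom_surjective (hX : ∀ i < d, Subsingleton (ModExt R X R i))
    (hY : ∀ i, Subsingleton (ModExt R Y R (i + 1))) :
    Function.Surjective (dualHom (R := R) X Y d) := by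
  intro ψ
  obtain ⟨n, π, hπ⟩ := Module.Finite.exists_fin' R Y
  have h := IsShortExact.of_surjective hπ
  have := subsingleton_of_projective (R := R) (Fin n → R) R 0
  obtain ⟨w, hw⟩ := dualHom_pi_surjective d n (ψ ∘ₗ π)
  have hw_ker : postcomp X d (LinearMap.ker π).subtype.dualMap w = 0 := by
    apply dualHom_injective hX fun i =>
      (h.syzygyShift R i).toEquiv.subsingleton_congr.2 (hY (i + 1))
    rw [dualHom_postcomp_dualMap, hw, LinearMap.comp_assoc, h.comp_eq_zero, LinearMap.comp_zero,
      map_zero]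
  obtain ⟨x, rfl⟩ := ((h.dual (h.dualMap_surjective_iff.2 (hY 0))).exact_postcomp X d w).1 hw_ker
  refine ⟨x, (LinearMap.cancel_right hπ).1 ?_⟩
  rw [← dualHom_postcomp_dualMap, hw]

theorem subsingleton_hom_coker [Module.Finite R Z] (hX : ∀ i < d, Subsingleton (ModExt R X R i))
    (hY : ∀ i, Subsingleton (ModExt R Y R (i + 1))) (hZ : ∀ i, Subsingleton (ModExt R Z R (i + 1)))
    {a : Y →ₗ[R] Z} (ha : Function.Injective (postcomp X d a.dualMap)) :
    Subsingleton ((Z ⧸ LinearMap.range a) →ₗ[R] ModExt R X R d) := by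
  refine subsingleton_of_forall_eq 0 fun ψ => ?_
  obtain ⟨x, hx⟩ := dualHom_surjective hX hZ (ψ ∘ₗ (LinearMap.range a).mkQ)
  have hx0 : x = 0 := by
    apply ha
    apply dualHom_injective hX hY
    rw [dualHom_postcomp_dualMap, hx, LinearMap.comp_assoc, LinearMap.range_mkQ_comp,
      LinearMap.comp_zero, map_zero, map_zero]
  rw [hx0, map_zero] at hx
  exact Submodule.linearMap_qext _ (hx.symm.trans (LinearMap.zero_comp _).symm)

end ModExt

end DualHom

section AuslanderBridger

variable {R : Type u} [CommRing R] {M N K X : Type u} [AddCommGroup M] [Module R M]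
  [AddCommGroup N] [Module R N] [AddCommGroup K] [Module R K] [AddCommGroup X] [Module R X]
  {f : M →ₗ[R] N} {g : N →ₗ[R] K}

namespace IsGDimZero

/-- The biduality isomorphism of a module of G-dimension zero. -/
def evalEquiv (hM : IsGDimZero R M) : M ≃ₗ[R] Module.Dual R (Module.Dual R M) :=
  LinearEquiv.ofBijective _ hM.2.1

theorem of_isShortExact (h : IsShortExact f g) (hM : IsGDimZero R M) (hN : IsGDimZero R N)
    (hf : Function.Surjective f.dualMap) : IsGDimZero R K := by
  obtain ⟨-, hevalM, hM, hMdual⟩ := isGDimZero_iff.1 hM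
  obtain ⟨_, hevalN, hN, hNdual⟩ := isGDimZero_iff.1 hN
  have hdual := h.dual hf
  have := hNdual 0
  have hbidual := hdual.dual (hdual.dualMap_surjective_iff.2 (hMdual 0))
  refine isGDimZero_iff.2 ⟨Module.Finite.of_surjective g h.surjective, ?_, fun i => ?_, fun i => ?_⟩
  · exact LinearMap.bijective_of_surjective_of_bijective_of_right_exact f g f.dualMap.dualMap
      g.dualMap.dualMap (Module.Dual.eval R M) (Module.Dual.eval R N) (Module.Dual.eval R K)
      rfl rfl h.exact hbidual.exact hevalM.2 hevalN h.surjective hbidual.surjective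
  · have := hN i
    cases i with
    | zero => exact h.dualMap_surjective_iff.1 hf
    | succ i =>
      have := hM i
      exact subsingleton_of_exact (h.exact_contravariantδ_precomp R (i + 1))
  · have := hNdual i
    have := hMdual (i + 1)
    exact subsingleton_of_exact (hdual.exact_precomp_contravariantδ R (i + 1))

theorem postcomp_dualMap_dualMap_injective (hM : IsGDimZero R M) (hN : IsGDimZero R N) {d : ℕ}
    (hf : Function.Injective (ModExt.postcomp X d f)) :
    Function.Injective (ModExt.postcomp X d f.dualMap.dualMap) := by
  have hcomp : ModExt.postcomp X d f.dualMap.dualMap ∘ ModExt.postcompEquiv X d hM.evalEquiv =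
      ModExt.postcompEquiv X d hN.evalEquiv ∘ ModExt.postcomp X d f :=
    funext fun x => (ModExt.postcomp_postcomp d _ _ x).trans
      (ModExt.postcomp_postcomp d f (Module.Dual.eval R N) x).symm
  refine ((ModExt.postcompEquiv X d hM.evalEquiv).toEquiv.injective_comp _).1 ?_
  exact hcomp ▸ (ModExt.postcompEquiv X d hN.evalEquiv).injective.comp hf

theorem edepth_le_edepth [IsNoetherianRing R] (hM : IsGDimZero R M) (I : Ideal R) :
    edepth R I R ≤ edepth R I M := by
  have ⟨_, _, _, hMdual⟩ := isGDimZero_iff.1 hM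
  refine ENat.forall_natCast_le_iff_le.1 fun n hn => ?_
  rw [natCast_le_edepth_iff] at hn ⊢
  intro i hi
  have := ModExt.subsingleton_dual (fun j hj => hn j (by omega)) hMdual (i := i)
  exact (ModExt.postcompEquiv _ i hM.evalEquiv).toEquiv.subsingleton

end IsGDimZero

theorem IsShortExact.min_edepth_le (h : IsShortExact f g) (I : Ideal R) :
    min (edepth R I N) (edepth R I K) ≤ edepth R I M := by
  refine ENat.forall_natCast_le_iff_le.1 fun n hn => ?_
  rw [le_min_iff, natCast_le_edepth_iff, natCast_le_edepth_iff] at hn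
  refine natCast_le_edepth_iff.2 fun i hi => ?_
  have := hn.1 i hi
  cases i with
  | zero => exact (ModExt.postcomp_zero_injective h.injective).subsingleton
  | succ i =>
    have := hn.2 i (by omega)
    exact h.subsingleton_left i

section Local

variable [IsLocalRing R] [IsNoetherianRing R]

open IsLocalRing

variable (R) in
theorem rdepth_le_ringKrullDim : (rdepth R : WithBot ℕ∞) ≤ ringKrullDim R := by
  rw [← maximalIdeal_height_eq_ringKrullDim, WithBot.coe_le_coe]
  refine ENat.forall_natCast_le_iff_le.1 fun n hn => ?_
  have hlt : maximalIdeal R • (⊤ : Submodule R R) < ⊤ := by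
    rw [smul_eq_mul, Ideal.mul_top]
    exact Ideal.IsPrime.ne_top'.lt_top
  have hsupp : Module.support R (R ⧸ maximalIdeal R) =
      PrimeSpectrum.zeroLocus (maximalIdeal R : Set R) := by
    rw [Module.support_eq_zeroLocus, Ideal.annihilator_quotient]
  obtain ⟨rs, hlen, -, hreg⟩ := ModuleCat.exists_isRegular_of_exists_subsingleton_ext
    (maximalIdeal R) n (ModuleCat.of R R) hlt (ModuleCat.of R (R ⧸ maximalIdeal R)) hsupp
    (natCast_le_edepth_iff.1 hn)
  have : Nontrivial (R ⧸ Ideal.ofList rs) := by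
    simpa using hreg.quot_ofList_smul_nontrivial ⊤
  rw [← WithBot.coe_le_coe, maximalIdeal_height_eq_ringKrullDim,
    ← ringKrullDim_add_length_eq_ringKrullDim_of_isRegular rs hreg, hlen]
  exact le_add_of_nonneg_left ringKrullDim_nonneg_of_nontrivial

variable (R) in
theorem rdepth_lt_top : rdepth R < ⊤ :=
  WithBot.coe_lt_coe.1 ((rdepth_le_ringKrullDim R).trans_lt ringKrullDim_lt_top)

theorem subsingleton_of_subsingleton_linearMap [Module.Finite R M] [Module.Finite R N]
    (hN : maximalIdeal R ≤ Module.annihilator R N) [Nontrivial N] [Subsingleton (M →ₗ[R] N)] :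
    Subsingleton M := by
  obtain ⟨r, hrM, hrN⟩ := IsSMulRegular.subsingleton_linearMap_iff.1 ‹Subsingleton (M →ₗ[R] N)›
  obtain ⟨x, hx⟩ := exists_ne (0 : N)
  have hr : r ∉ maximalIdeal R := fun hr => hx (hrN (by
    simp [Module.mem_annihilator.1 (hN hr)]))
  exact Module.annihilator_eq_top_iff.1
    (Ideal.eq_top_of_isUnit_mem _ hrM (notMem_maximalIdeal.1 hr))

-- With `d = depth R` and `k` the residue field, every map from the cokernel of `N* → M*` to the
-- nonzero `k`-vector space `Ext^d(k,R)` vanishes, so that cokernel is zero by Nakayama.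
theorem IsGDimZero.of_isShortExact_of_rdepth_le (h : IsShortExact f g) (hM : IsGDimZero R M)
    (hN : IsGDimZero R N) (hK : rdepth R ≤ edepth R (maximalIdeal R) K) : IsGDimZero R K := by
  refine .of_isShortExact h hM hN ?_
  obtain ⟨d, hd⟩ := ENat.ne_top_iff_exists.1 (rdepth_lt_top R).ne
  rw [← hd, natCast_le_edepth_iff] at hK
  obtain ⟨hne, hlt⟩ := edepth_eq_natCast_iff.1 hd.symm
  obtain ⟨_, -, -, hMdual⟩ := isGDimZero_iff.1 hM
  obtain ⟨_, -, -, hNdual⟩ := isGDimZero_iff.1 hN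
  have hf : Function.Injective (ModExt.postcomp (R ⧸ maximalIdeal R) d f) := by
    cases d with
    | zero => exact ModExt.postcomp_zero_injective h.injective
    | succ d =>
      have := hK d d.lt_succ_self
      exact h.postcomp_succ_injective d
  have := ModExt.subsingleton_hom_coker hlt hNdual hMdual
    (hM.postcomp_dualMap_dualMap_injective hN hf)
  have := not_subsingleton_iff_nontrivial.1 hne
  rw [← LinearMap.range_eq_top, ← Submodule.Quotient.subsingleton_iff]
  exact subsingleton_of_subsingleton_linearMap (N := ModExt R (R ⧸ maximalIdeal R) R d)
    fun r hr => Module.mem_annihilator.2 (ModExt.smul_eq_zero_of_mem hr d)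

theorem GDimLE.isGDimZero_of_rdepth_le {n : ℕ} {M : ModuleCat.{u} R} (hM : GDimLE R n M)
    (hdepth : rdepth R ≤ edepth R (maximalIdeal R) M) : IsGDimZero R M := by
  induction n generalizing M with
  | zero => exact hM
  | succ n ih =>
    obtain ⟨G, f, hG, hf, hker⟩ := hM
    have h := IsShortExact.of_surjective hf
    have hkerdepth := (le_min (hG.edepth_le_edepth _) hdepth).trans (h.min_edepth_le _)
    exact .of_isShortExact_of_rdepth_le h (ih hker hkerdepth) hG hdepth

end Local

end AuslanderBridger

section DualCoker

variable {R : Type u} [CommRing R] {P M X : Type u} [AddCommGroup P] [Module R P]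
  [AddCommGroup M] [Module R M] [AddCommGroup X] [Module R X] {ε : P →ₗ[R] M}

/-- For a presentation `L → P → M → 0`, the cokernel of `M* → P*` is the image of `P* → L*`. -/
def dualCokerEquivRange {L : Type u} [AddCommGroup L] [Module R L] {d : L →ₗ[R] P}
    (hexact : Function.Exact d ε) (hε : Function.Surjective ε) :
    DualCoker ε ≃ₗ[R] LinearMap.range d.dualMap :=
  Submodule.quotEquivOfEq _ _
      (LinearMap.exact_iff.1 (LinearMap.exact_lcomp_of_exact_of_surjective R hexact hε)).symm ≪≫ₗ
    d.dualMap.quotKerEquivRange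

theorem isShortExact_dualMap_mkQ (hε : Function.Surjective ε) :
    IsShortExact ε.dualMap (LinearMap.range ε.dualMap).mkQ :=
  .of_injective (LinearMap.dualMap_injective_of_surjective hε)

theorem isAssociatedPrime_iff_not_subsingleton [IsNoetherianRing R] {I : Ideal R} [I.IsMaximal] :
    IsAssociatedPrime I M ↔ ¬Subsingleton ((R ⧸ I) →ₗ[R] M) := by
  rw [isAssociatedPrime_iff_exists_injective_linearMap, not_subsingleton_iff_nontrivial,
    nontrivial_iff_exists_ne 0]
  have : IsSimpleModule R (R ⧸ I) := isSimpleModule_iff_isCoatom.2 (Ideal.isMaximal_def.1 ‹_›)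
  constructor
  · rintro ⟨-, f, hf⟩
    refine ⟨f, fun h => one_ne_zero (hf ?_ : (1 : R ⧸ I) = 0)⟩
    simp [h]
  · rintro ⟨f, hf⟩
    exact ⟨inferInstance, f, f.injective_or_eq_zero.resolve_right hf⟩

variable [Module.Finite R P] [Module.Projective R P]

theorem range_dualMap_dualMap (hε : Function.Surjective ε) :
    LinearMap.range ε.dualMap.dualMap = LinearMap.range (Module.Dual.eval R M) := by
  have hcomp : ε.dualMap.dualMap ∘ₗ Module.Dual.eval R P = Module.Dual.eval R M ∘ₗ ε := rfl
  rw [← LinearMap.range_comp_of_range_eq_top ε.dualMap.dualMap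
      (LinearMap.range_eq_top.2 (Module.bijective_dual_eval R P).2), hcomp,
    LinearMap.range_comp_of_range_eq_top _ (LinearMap.range_eq_top.2 hε)]

/-- A torsionless quotient `M` of a finite projective module `P` is the image of `P** → M**`. -/
def torsionlessEquivRange (hε : Function.Surjective ε)
    (hM : Function.Injective (Module.Dual.eval R M)) :
    M ≃ₗ[R] LinearMap.range ε.dualMap.dualMap :=
  LinearEquiv.ofInjective _ hM ≪≫ₗ LinearEquiv.ofEq _ _ (range_dualMap_dualMap hε).symm

theorem IsGDimZero.subsingleton_ext_dualCoker (hM : IsGDimZero R M) (hε : Function.Surjective ε)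
    (i : ℕ) : Subsingleton (ModExt R (DualCoker ε) R (i + 1)) := by
  obtain ⟨-, heval, -, hMdual⟩ := isGDimZero_iff.1 hM
  cases i with
  | zero =>
    have := ModExt.subsingleton_of_projective (R := R) (Module.Dual R P) R 0
    rw [← (isShortExact_dualMap_mkQ hε).dualMap_surjective_iff, ← LinearMap.range_eq_top,
      range_dualMap_dualMap hε, LinearMap.range_eq_top]
    exact heval.2
  | succ i =>
    have := hMdual i
    exact ((isShortExact_dualMap_mkQ hε).syzygyShift R i).toEquiv.symm.subsingleton

variable [IsNoetherianRing R]

theorem subsingleton_ext_of_torsionless (hε : Function.Surjective ε)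
    (hM : Function.Injective (Module.Dual.eval R M)) (i : ℕ)
    (hcoker : ∀ j < i, Subsingleton (ModExt R (DualCoker ε) R (j + 1)))
    (hX : ∀ j ≤ i, Subsingleton (ModExt R X R j)) : Subsingleton (ModExt R X M i) :=
  have := (isShortExact_dualMap_mkQ hε).subsingleton_range_dualMap i hcoker hX
  (ModExt.postcompEquiv (N := LinearMap.range ε.dualMap.dualMap) X i
    (torsionlessEquivRange hε hM)).toEquiv.subsingleton

theorem nonempty_ext_equiv_of_torsionless (hε : Function.Surjective ε)
    (hM : Function.Injective (Module.Dual.eval R M)) (n : ℕ)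
    (hcoker : ∀ j < n, Subsingleton (ModExt R (DualCoker ε) R (j + 1)))
    (hX : ∀ j ≤ n + 1, Subsingleton (ModExt R X R j)) :
    Nonempty (ModExt R X M (n + 1) ≃ₗ[R] (X →ₗ[R] ModExt R (DualCoker ε) R (n + 1))) :=
  ((isShortExact_dualMap_mkQ hε).nonempty_range_dualMap_equiv n hcoker hX).map
    (ModExt.postcompEquiv X (n + 1) (torsionlessEquivRange hε hM) ≪≫ₗ ·)

section Local

variable [IsLocalRing R] {n s : ℕ}

open IsLocalRing

theorem add_two_le_rdepth (hε : Function.Surjective ε)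
    (hM : Function.Injective (Module.Dual.eval R M)) (hfin : GDimLE R n (ModuleCat.of R M))
    (hne : ¬IsGDimZero R M) (hcoker : ∀ i < s, Subsingleton (ModExt R (DualCoker ε) R (i + 1))) :
    (s + 2 : ℕ) ≤ rdepth R := by
  by_contra! hlt
  refine hne (hfin.isGDimZero_of_rdepth_le (ENat.forall_natCast_le_iff_le.1 fun m hm => ?_))
  have hms : m < s + 2 := Nat.cast_lt.1 (hm.trans_lt hlt)
  rw [rdepth, natCast_le_edepth_iff] at hm
  exact natCast_le_edepth_iff.2 fun i hi => subsingleton_ext_of_torsionless hε hM i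
    (fun j hj => hcoker j (by omega)) (fun j hj => hm j (by omega))

theorem add_one_le_edepth (hε : Function.Surjective ε)
    (hM : Function.Injective (Module.Dual.eval R M)) (hfin : GDimLE R n (ModuleCat.of R M))
    (hne : ¬IsGDimZero R M) (hcoker : ∀ i < s, Subsingleton (ModExt R (DualCoker ε) R (i + 1))) :
    (s + 1 : ℕ) ≤ edepth R (maximalIdeal R) M := by
  have hR := natCast_le_edepth_iff.1 (add_two_le_rdepth hε hM hfin hne hcoker)
  exact natCast_le_edepth_iff.2 fun i hi => subsingleton_ext_of_torsionless hε hM i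
    (fun j hj => hcoker j (by omega)) (fun j hj => hR j (by omega))

theorem edepth_eq_add_one_iff (hε : Function.Surjective ε)
    (hM : Function.Injective (Module.Dual.eval R M)) (hfin : GDimLE R n (ModuleCat.of R M))
    (hne : ¬IsGDimZero R M) (hcoker : ∀ i < s, Subsingleton (ModExt R (DualCoker ε) R (i + 1))) :
    edepth R (maximalIdeal R) M = (s + 1 : ℕ) ↔
      IsAssociatedPrime (maximalIdeal R) (ModExt R (DualCoker ε) R (s + 1)) := by
  have hR := natCast_le_edepth_iff.1 (add_two_le_rdepth hε hM hfin hne hcoker)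
  obtain ⟨e⟩ := nonempty_ext_equiv_of_torsionless hε hM s hcoker fun j hj => hR j (by omega)
  rw [edepth_eq_natCast_iff, isAssociatedPrime_iff_not_subsingleton, e.toEquiv.subsingleton_congr]
  exact and_iff_left (natCast_le_edepth_iff.1 (add_one_le_edepth hε hM hfin hne hcoker))

end Local

end DualCoker

section Localization

open IsLocalizedModule (mapExtendScalars)

variable {R : Type u} [CommRing R] (S : Submonoid R) {A : Type u} [CommRing A] [Algebra R A]
  [IsLocalization S A] {X Y Z X' Y' Z' : Type u}
  [AddCommGroup X] [Module R X] [AddCommGroup Y] [Module R Y] [AddCommGroup Z] [Module R Z]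
  [AddCommGroup X'] [Module R X'] [Module A X'] [IsScalarTower R A X']
  [AddCommGroup Y'] [Module R Y'] [Module A Y'] [IsScalarTower R A Y']
  [AddCommGroup Z'] [Module R Z'] [Module A Z'] [IsScalarTower R A Z']

section Maps

variable (lX : X →ₗ[R] X') (lY : Y →ₗ[R] Y') (lZ : Z →ₗ[R] Z')
  [IsLocalizedModule S lX] [IsLocalizedModule S lY] [IsLocalizedModule S lZ]

theorem eq_mapExtendScalars {f : X →ₗ[R] Y} {f' : X' →ₗ[A] Y'}
    (h : ∀ x, f' (lX x) = lY (f x)) : f' = mapExtendScalars S lX lY A f := by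
  refine LinearMap.restrictScalars_injective R (IsLocalizedModule.linearMap_ext S lX lY ?_)
  ext x
  simp [h]

variable (A) in
theorem IsShortExact.mapExtendScalars {f : X →ₗ[R] Y} {g : Y →ₗ[R] Z} (h : IsShortExact f g) :
    IsShortExact (mapExtendScalars S lX lY A f) (mapExtendScalars S lY lZ A g) :=
  ⟨IsLocalizedModule.map_injective S lX lY f h.injective,
    IsLocalizedModule.map_exact S lX lY lZ f g h.exact,
    IsLocalizedModule.map_surjective S lY lZ g h.surjective⟩

variable (A) in
/-- The comparison map `Hom_R(X, R) → Hom_A(X', A)` for a localization `X → X'`; it is itself a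
localization when `X` is finitely presented. -/
abbrev dualLocalization : Module.Dual R X →ₗ[R] Module.Dual A X' :=
  mapExtendScalars S lX (Algebra.linearMap R A) A

theorem dual_ext (l : X →ₗ[R] X') [IsLocalizedModule S l] {φ ψ : Module.Dual A X'}
    (h : ∀ x, φ (l x) = ψ (l x)) : φ = ψ := by
  refine LinearMap.restrictScalars_injective R
    (IsLocalizedModule.linearMap_ext S l (Algebra.linearMap R A) ?_)
  ext x
  exact h x

theorem dualMap_mapExtendScalars [Module.FinitePresentation R X] [Module.FinitePresentation R Y]
    (f : X →ₗ[R] Y) : (mapExtendScalars S lX lY A f).dualMap =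
      mapExtendScalars S (dualLocalization S A lY) (dualLocalization S A lX) A f.dualMap :=
  eq_mapExtendScalars S _ _ fun φ => dual_ext S lX fun x => by simp

theorem eval_eq_mapExtendScalars [Module.FinitePresentation R X]
    [Module.FinitePresentation R (Module.Dual R X)] :
    Module.Dual.eval A X' = mapExtendScalars S lX
      (dualLocalization S A (dualLocalization S A lX)) A (Module.Dual.eval R X) :=
  eq_mapExtendScalars S _ _ fun x => dual_ext S (dualLocalization S A lX) fun φ => by
    rw [Module.Dual.eval_apply]
    simp

theorem exists_isLocalizedModule_dualCoker [Module.FinitePresentation R X]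
    [Module.FinitePresentation R Y] (f : X →ₗ[R] Y) :
    ∃ l : DualCoker f →ₗ[R] DualCoker (mapExtendScalars S lX lY A f), IsLocalizedModule S l := by
  have hrange : (LinearMap.range f.dualMap).localized' A S (dualLocalization S A lX) =
      LinearMap.range (mapExtendScalars S lX lY A f).dualMap := by
    rw [dualMap_mapExtendScalars]
    exact LinearMap.localized'_range_eq_range_localizedMap A S (dualLocalization S A lY) _ _
  unfold DualCoker
  rw [← hrange]
  exact ⟨(LinearMap.range f.dualMap).toLocalizedQuotient' A S (dualLocalization S A lX),
    inferInstance⟩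

end Maps

section Noetherian

variable [IsNoetherianRing R]

theorem nonempty_ext_equiv_of_isLocalizedModule {X X' : Type u} [AddCommGroup X] [Module R X]
    [AddCommGroup X'] [Module R X'] [Module A X'] [IsScalarTower R A X'] (lX : X →ₗ[R] X')
    [IsLocalizedModule S lX] [Module.Finite R X] (i : ℕ) {E' : Type u}
    [AddCommGroup E'] [Module R E'] [Module A E'] [IsScalarTower R A E']
    (l : ModExt R X R (i + 1) →ₗ[R] E') [IsLocalizedModule S l] :
    Nonempty (ModExt A X' A (i + 1) ≃ₗ[A] E') := by
  obtain ⟨n, π, hπ⟩ := Module.Finite.exists_fin' R X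
  let lF : (Fin n → R) →ₗ[R] (Fin n → A) := .pi fun j => (Algebra.linearMap R A).comp (.proj j)
  let lK := (LinearMap.ker π).toLocalized' A S lF
  have h := IsShortExact.of_surjective hπ
  have h' := h.mapExtendScalars S A lK lF lX
  cases i with
  | zero =>
    have := ModExt.subsingleton_of_projective (R := R) (Fin n → R) R 0
    have := ModExt.subsingleton_of_projective (R := A) (Fin n → A) A 0
    have := Module.finitePresentation_of_finite R (LinearMap.ker π)
    obtain ⟨lcoker, _⟩ := exists_isLocalizedModule_dualCoker S (A := A) lK lF
      (LinearMap.ker π).subtype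
    have := IsLocalizedModule.of_linearEquiv_right S l h.dualCokerEquivExtOne
    exact ⟨h'.dualCokerEquivExtOne.symm ≪≫ₗ (IsLocalizedModule.linearEquiv S lcoker
      (l ∘ₗ h.dualCokerEquivExtOne.toLinearMap)).extendScalarsOfIsLocalization S A⟩
  | succ i =>
    have := IsLocalizedModule.of_linearEquiv_right S l (h.syzygyShift R i)
    obtain ⟨e⟩ := nonempty_ext_equiv_of_isLocalizedModule lK i
      (l ∘ₗ (h.syzygyShift R i).toLinearMap)
    exact ⟨(h'.syzygyShift A i).symm ≪≫ₗ e⟩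

theorem subsingleton_ext_of_isLocalizedModule (lX : X →ₗ[R] X') [IsLocalizedModule S lX]
    [Module.Finite R X] (i : ℕ) [Subsingleton (ModExt R X R (i + 1))] :
    Subsingleton (ModExt A X' A (i + 1)) := by
  let _ : Module A (LocalizedModule S (ModExt R X R (i + 1))) :=
    LocalizedModule.moduleOfIsLocalization
  have := IsLocalizedModule.subsingleton_of_subsingleton S
    (LocalizedModule.mkLinearMap S (ModExt R X R (i + 1)))
  obtain ⟨e⟩ := nonempty_ext_equiv_of_isLocalizedModule (A := A) S lX i
    (LocalizedModule.mkLinearMap S (ModExt R X R (i + 1)))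
  exact e.subsingleton

theorem dual_eval_injective_of_isLocalizedModule (lX : X →ₗ[R] X') [IsLocalizedModule S lX]
    [Module.Finite R X] (h : Function.Injective (Module.Dual.eval R X)) :
    Function.Injective (Module.Dual.eval A X') := by
  have := Module.finitePresentation_of_finite R X
  have := Module.finitePresentation_of_finite R (Module.Dual R X)
  rw [eval_eq_mapExtendScalars S lX]
  exact IsLocalizedModule.map_injective S _ _ _ h

theorem dual_eval_surjective_of_isLocalizedModule (lX : X →ₗ[R] X') [IsLocalizedModule S lX]
    [Module.Finite R X] (h : Function.Surjective (Module.Dual.eval R X)) :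
    Function.Surjective (Module.Dual.eval A X') := by
  have := Module.finitePresentation_of_finite R X
  have := Module.finitePresentation_of_finite R (Module.Dual R X)
  rw [eval_eq_mapExtendScalars S lX]
  exact IsLocalizedModule.map_surjective S _ _ _ h

theorem IsGDimZero.of_isLocalizedModule (lX : X →ₗ[R] X') [IsLocalizedModule S lX]
    (hX : IsGDimZero R X) : IsGDimZero A X' := by
  obtain ⟨_, heval, hext, hext_dual⟩ := isGDimZero_iff.1 hX
  have := Module.finitePresentation_of_finite R X
  refine isGDimZero_iff.2 ⟨.of_isLocalizedModule S lX,
    ⟨dual_eval_injective_of_isLocalizedModule S lX heval.1,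
      dual_eval_surjective_of_isLocalizedModule S lX heval.2⟩, fun i => ?_, fun i => ?_⟩
  · have := hext i
    exact subsingleton_ext_of_isLocalizedModule S lX i
  · have := hext_dual i
    exact subsingleton_ext_of_isLocalizedModule S (dualLocalization S A lX) i

theorem GDimLE.of_isLocalizedModule {n : ℕ} (lX : X →ₗ[R] X') [IsLocalizedModule S lX]
    (hX : GDimLE R n (ModuleCat.of R X)) : GDimLE A n (ModuleCat.of A X') := by
  induction n generalizing X X' with
  | zero => exact IsGDimZero.of_isLocalizedModule S lX hX
  | succ n ih =>
    obtain ⟨G, f, hG, hf, hker⟩ := hX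
    let _ : Module A (LocalizedModule S G) := LocalizedModule.moduleOfIsLocalization
    let lG := LocalizedModule.mkLinearMap S G
    have hker' := ih ((LinearMap.ker f).toLocalized' A S lG) hker
    rw [LinearMap.localized'_ker_eq_ker_localizedMap A S lG lX f] at hker'
    exact ⟨.of A (LocalizedModule S G), mapExtendScalars S lG lX A f, hG.of_isLocalizedModule S lG,
      IsLocalizedModule.map_surjective S lG lX f hf, hker'⟩

theorem nonempty_ext_dualCoker_equiv_of_isLocalizedModule (lX : X →ₗ[R] X')
    (lY : Y →ₗ[R] Y') [IsLocalizedModule S lX] [IsLocalizedModule S lY] [Module.Finite R X]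
    [Module.Finite R Y] (f : X →ₗ[R] Y) (i : ℕ) {E' : Type u}
    [AddCommGroup E'] [Module R E'] [Module A E'] [IsScalarTower R A E']
    (l : ModExt R (DualCoker f) R (i + 1) →ₗ[R] E') [IsLocalizedModule S l] :
    Nonempty (ModExt A (DualCoker (mapExtendScalars S lX lY A f)) A (i + 1) ≃ₗ[A] E') := by
  have := Module.finitePresentation_of_finite R X
  have := Module.finitePresentation_of_finite R Y
  obtain ⟨lcoker, _⟩ := exists_isLocalizedModule_dualCoker S (A := A) lX lY f
  exact nonempty_ext_equiv_of_isLocalizedModule S lcoker i l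

end Noetherian

end Localization

section Presentation

open IsLocalRing

variable {R : Type u} [CommRing R] [IsNoetherianRing R] {P M : Type u} [AddCommGroup P] [Module R P]
  [Module.Finite R P] [AddCommGroup M] [Module R M] {ε : P →ₗ[R] M} {n s : ℕ}

section AtPrime

variable (p : Ideal R) [p.IsPrime]

theorem nonempty_ext_dualCoker_map_equiv [Module.Finite R M] (ε : P →ₗ[R] M) (i : ℕ) :
    Nonempty (ModExt (Localization.AtPrime p) (DualCoker (LocalizedModule.map p.primeCompl ε))
        (Localization.AtPrime p) (i + 1) ≃ₗ[Localization.AtPrime p]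
      LocalizedModule p.primeCompl (ModExt R (DualCoker ε) R (i + 1))) :=
  nonempty_ext_dualCoker_equiv_of_isLocalizedModule p.primeCompl _ _ ε i
    (LocalizedModule.mkLinearMap p.primeCompl _)

theorem isAssociatedPrime_ext_dualCoker_map [Module.Finite R M]
    (hp : IsAssociatedPrime p (ModExt R (DualCoker ε) R (s + 1))) :
    IsAssociatedPrime (maximalIdeal (Localization.AtPrime p))
      (ModExt (Localization.AtPrime p) (DualCoker (LocalizedModule.map p.primeCompl ε))
        (Localization.AtPrime p) (s + 1)) := by
  obtain ⟨e⟩ := nonempty_ext_dualCoker_map_equiv p ε s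
  exact e.isAssociatedPrime_iff.2
    (Module.associatedPrimes.mem_associatedPrimes_atPrime_of_mem_associatedPrimes hp)

theorem subsingleton_ext_dualCoker_map [Module.Finite R M]
    (h : Subsingleton (ModExt R (DualCoker ε) R (s + 1))) :
    Subsingleton (ModExt (Localization.AtPrime p) (DualCoker (LocalizedModule.map p.primeCompl ε))
        (Localization.AtPrime p) (s + 1)) := by
  obtain ⟨e⟩ := nonempty_ext_dualCoker_map_equiv p ε s
  have := IsLocalizedModule.subsingleton_of_subsingleton p.primeCompl
    (LocalizedModule.mkLinearMap p.primeCompl (ModExt R (DualCoker ε) R (s + 1)))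
  exact e.subsingleton

variable [Module.Projective R P]

theorem locGDim_ne_zero_of_isAssociatedPrime (hε : Function.Surjective ε)
    (hp : IsAssociatedPrime p (ModExt R (DualCoker ε) R (s + 1))) : locGDim R p M ≠ 0 := by
  intro hzero
  have := Module.Finite.of_surjective ε hε
  have : Module.Projective (Localization.AtPrime p) (LocalizedModule p.primeCompl P) :=
    Module.projective_of_isLocalizedModule p.primeCompl
      (LocalizedModule.mkLinearMap p.primeCompl P)
  have := (GDim_eq_zero_iff.1 hzero).subsingleton_ext_dualCoker
    (LocalizedModule.map_surjective p.primeCompl ε hε) s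
  exact not_isAssociatedPrime_of_subsingleton (isAssociatedPrime_ext_dualCoker_map p hp)

theorem add_one_le_locDepth (hε : Function.Surjective ε)
    (hM : Function.Injective (Module.Dual.eval R M)) (hfin : GDimLE R n (ModuleCat.of R M))
    (hcoker : ∀ i < s, Subsingleton (ModExt R (DualCoker ε) R (i + 1)))
    (hp : locGDim R p M ≠ 0) : (s + 1 : ℕ) ≤ locDepth R p M := by
  have := Module.Finite.of_surjective ε hε
  let lM := LocalizedModule.mkLinearMap p.primeCompl M
  exact add_one_le_edepth (LocalizedModule.map_surjective p.primeCompl ε hε)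
    (dual_eval_injective_of_isLocalizedModule p.primeCompl lM hM)
    (hfin.of_isLocalizedModule p.primeCompl lM) (mt GDim_eq_zero_iff.2 hp)
    fun i hi => subsingleton_ext_dualCoker_map p (hcoker i hi)

theorem locDepth_eq_add_one_of_isAssociatedPrime (hε : Function.Surjective ε)
    (hM : Function.Injective (Module.Dual.eval R M)) (hfin : GDimLE R n (ModuleCat.of R M))
    (hcoker : ∀ i < s, Subsingleton (ModExt R (DualCoker ε) R (i + 1)))
    (hp : IsAssociatedPrime p (ModExt R (DualCoker ε) R (s + 1))) :
    locDepth R p M = (s + 1 : ℕ) := by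
  have := Module.Finite.of_surjective ε hε
  let lM := LocalizedModule.mkLinearMap p.primeCompl M
  have hp0 := locGDim_ne_zero_of_isAssociatedPrime p hε hp
  exact (edepth_eq_add_one_iff (LocalizedModule.map_surjective p.primeCompl ε hε)
    (dual_eval_injective_of_isLocalizedModule p.primeCompl lM hM)
    (hfin.of_isLocalizedModule p.primeCompl lM) (mt GDim_eq_zero_iff.2 hp0)
    fun i hi => subsingleton_ext_dualCoker_map p (hcoker i hi)).2
      (isAssociatedPrime_ext_dualCoker_map p hp)

end AtPrime

theorem edepth_le_locDepth_tfae [IsLocalRing R] [Module.Projective R P]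
    (hε : Function.Surjective ε) (hM : Function.Injective (Module.Dual.eval R M))
    (hfin : GDimLE R n (ModuleCat.of R M))
    (hcoker : ∀ i < s, Subsingleton (ModExt R (DualCoker ε) R (i + 1)))
    (hne : ¬Subsingleton (ModExt R (DualCoker ε) R (s + 1))) :
    List.TFAE [edepth R (maximalIdeal R) M = (s + 1 : ℕ),
      IsAssociatedPrime (maximalIdeal R) (ModExt R (DualCoker ε) R (s + 1)),
      ∀ (p : Ideal R) (h : p.IsPrime), haveI := h; locGDim R p M ≠ 0 →
        edepth R (maximalIdeal R) M ≤ locDepth R p M] := by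
  have hM0 : ¬IsGDimZero R M := fun hM0 => hne (hM0.subsingleton_ext_dualCoker hε s)
  tfae_have 1 ↔ 2 := edepth_eq_add_one_iff hε hM hfin hM0 hcoker
  tfae_have 1 → 3 := fun hdepth p _ hp => hdepth ▸ add_one_le_locDepth p hε hM hfin hcoker hp
  tfae_have 3 → 1 := by
    intro hle
    rw [not_subsingleton_iff_nontrivial] at hne
    obtain ⟨p, hp⟩ := associatedPrimes.nonempty R (ModExt R (DualCoker ε) R (s + 1))
    have hprime : p.IsPrime := hp.isPrime
    have hdepth := locDepth_eq_add_one_of_isAssociatedPrime p hε hM hfin hcoker hp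
    exact le_antisymm
      (hdepth ▸ hle p hprime (locGDim_ne_zero_of_isAssociatedPrime p hε hp))
      (add_one_le_edepth hε hM hfin hM0 hcoker)
  tfae_finish

theorem stmt6_general [IsLocalRing R] [Module.Projective R P] {L : Type u} [AddCommGroup L]
    [Module R L] {d : L →ₗ[R] P} (hexact : Function.Exact d ε) (hε : Function.Surjective ε)
    (hfin : GDim R M < ⊤) (hM : Function.Injective (Module.Dual.eval R M)) {t : ℕ}
    (ht : rgr R (LinearMap.range d.dualMap) = (t : ℕ∞)) :
    List.TFAE [edepth R (maximalIdeal R) M = (t : ℕ∞),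
      IsAssociatedPrime (maximalIdeal R) (extM R t (LinearMap.range d.dualMap) R),
      ∀ (p : Ideal R) (h : p.IsPrime), haveI := h; locGDim R p M ≠ 0 →
        edepth R (maximalIdeal R) M ≤ locDepth R p M] := by
  obtain ⟨s, rfl, hne, hlt⟩ := exists_eq_add_one_of_rgr_eq_natCast ht
  obtain ⟨n, hn⟩ := exists_GDimLE_of_GDim_lt_top hfin
  have e (i : ℕ) :
      ModExt R (LinearMap.range d.dualMap) R i ≃ₗ[R] ModExt R (DualCoker ε) R i :=
    ModExt.precompEquiv (M := DualCoker ε) R i (dualCokerEquivRange hexact hε)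
  rw [((extMEquivModExt (s + 1) _ _) ≪≫ₗ e (s + 1)).isAssociatedPrime_iff]
  refine edepth_le_locDepth_tfae hε hM hn (fun i hi => ?_) ?_
  · rw [← (e (i + 1)).toEquiv.subsingleton_congr]
    exact hlt i hi
  · rwa [← (e (s + 1)).toEquiv.subsingleton_congr]

end Presentation

theorem IsHorizontallyLinked.dual_eval_injective {R M : Type u} [CommRing R] [AddCommGroup M]
    [Module R M] (h : IsHorizontallyLinked R M) : Function.Injective (Module.Dual.eval R M) := by
  obtain ⟨F, G, ⟨e⟩⟩ := h
  let j : M →ₗ[R] Module.Dual R (G.P 1) :=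
    (LinearMap.range (G.d 0).dualMap).subtype ∘ₗ e.symm.toLinearMap
  have hj : Function.Injective j := (Submodule.subtype_injective _).comp e.symm.injective
  refine (injective_iff_map_eq_zero _).2 fun x hx => (injective_iff_map_eq_zero j).1 hj x ?_
  ext q
  exact LinearMap.congr_fun hx (Module.Dual.eval R (G.P 1) q ∘ₗ j)

end

section Statements

variable (R : Type u) [CommRing R] [IsNoetherianRing R]

theorem stmt6 [IsLocalRing R] (M : Type u) [AddCommGroup M] [Module R M] [Module.Finite R M]
    (F : MinRes R M) (h0 : 0 < GDim R M) (hfin : GDim R M < ⊤)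
    (hHL : IsHorizontallyLinked R M) (t : ℕ) (ht : rgr R F.lambdaMod = (t : ℕ∞)) :
    List.TFAE [edepth R (IsLocalRing.maximalIdeal R) M = (t : ℕ∞),
      IsAssociatedPrime (IsLocalRing.maximalIdeal R) (extM R t F.lambdaMod R),
      ∀ (p : Ideal R) (h : p.IsPrime), haveI := h; locGDim R p M ≠ 0 →
        edepth R (IsLocalRing.maximalIdeal R) M ≤ locDepth R p M] :=
  have := F.projective 0
  have := F.finite 0
  stmt6_general (LinearMap.exact_iff.2 F.exact0.symm) F.surj hfin hHL.dual_eval_injective ht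

end Statements
end

section
/- Let M and N be R-modules and let n be a positive integer with rgr(M) ≥ n. Then: (i) Tor^R_i(T_nM, N) ≅ Ext^{n−i}_R(M,N) for 1 ≤ i < n, and Tor^R_i(T_nM, N) ≅ Tor^R_{i−n}(λM, N) for i > n; (ii) Ext^i_R(T_nM, N) ≅ Tor^R_{n−i}(M,N) for 1 ≤ i < n, and Ext^i_R(T_nM, N) ≅ Ext^{i−n}_R(λM, N) for i > n. -/
open CategoryTheory

/-!
Let `P` be a resolution of `M` by finitely generated projective modules. As `Ext^i(M, R) = 0` for
`0 < i < n`, the dual complex `P₀* → P₁* → ⋯ → P_n*` is exact at `P₁*, …, P_{n-1}*`. Hence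
`T_{n-a} M` is an `a`-th syzygy of `T_n M = coker (P_{n-1}* → P_n*)` and `λM = im (P₀* → P₁*)` is an
`n`-th one, so dimension shifting gives the isomorphisms in degrees above `n` and reduces those in
degrees below `n` to degree one. There `Tor₁` and `Ext¹` of `coker (P_{k+1}* → P_{k+2}*)` are the
homology at `P_{k+1}*` of `P* ⊗ N ≅ Hom(P, N)` and `Hom(P*, N) ≅ P ⊗ N`.

`CategoryTheory.Tor` is derived in its second argument, whereas `T_n M` and `M` stand in the first
one; the snake lemma moves the resolution from one argument to the other.
-/

noncomputable section

section Homology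

variable {R : Type u} [Ring R] {L : Type*} [AddCommGroup L] [Module R L]
  (S : ShortComplex (ModuleCat.{u} R))

/-- If `X₁ → X₂ → X₃` factors at `g` as `X₂ ↠ L → X₃` with `X₁ → X₂ → L` exact, its homology is
the kernel of `L → X₃`. -/
def homologyEquivKer (p : S.X₂ →ₗ[R] L) (j : L →ₗ[R] S.X₃) (hg : S.g.hom = j ∘ₗ p)
    (hp : Function.Surjective p) (hfp : Function.Exact S.f.hom p) :
    S.homology ≃ₗ[R] LinearMap.ker j :=
  let q : LinearMap.ker S.g.hom →ₗ[R] LinearMap.ker j :=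
    p.restrict fun x hx ↦ by simpa [hg] using hx
  have surjective_q : Function.Surjective q := by
    rintro ⟨y, hy⟩
    obtain ⟨x, rfl⟩ := hp y
    exact ⟨⟨x, by simpa [hg] using hy⟩, rfl⟩
  have range_eq_ker : LinearMap.range S.moduleCatToCycles = LinearMap.ker q := by
    ext ⟨x, hx⟩
    have mem_range : (⟨x, hx⟩ : LinearMap.ker S.g.hom) ∈ LinearMap.range S.moduleCatToCycles ↔
        x ∈ Set.range S.f.hom := by
      simp only [LinearMap.mem_range, Subtype.ext_iff]
      rfl
    simp [mem_range, q, Subtype.ext_iff, hfp x]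
  S.moduleCatHomologyIso.toLinearEquiv ≪≫ₗ Submodule.quotEquivOfEq _ _ range_eq_ker ≪≫ₗ
    q.quotKerEquivOfSurjective surjective_q

/-- If `X₁ → X₂ → X₃` factors at `f` as `X₁ → L ↪ X₂` with `L → X₂ → X₃` exact, its homology is
the cokernel of `X₁ → L`. -/
def homologyEquivQuotRange (q : S.X₁ →ₗ[R] L) (i : L →ₗ[R] S.X₂) (hf : S.f.hom = i ∘ₗ q)
    (hi : Function.Injective i) (hig : Function.Exact i S.g.hom) :
    S.homology ≃ₗ[R] L ⧸ LinearMap.range q :=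
  let e : L ≃ₗ[R] LinearMap.ker S.g.hom :=
    LinearEquiv.ofInjective i hi ≪≫ₗ LinearEquiv.ofEq _ _ hig.linearMap_ker_eq.symm
  have map_range : (LinearMap.range q).map e.toLinearMap = LinearMap.range S.moduleCatToCycles := by
    have toCycles_eq : S.moduleCatToCycles = e.toLinearMap ∘ₗ q :=
      LinearMap.ext fun x ↦ Subtype.ext (LinearMap.congr_fun hf x)
    rw [toCycles_eq, LinearMap.range_comp]
  S.moduleCatHomologyIso.toLinearEquiv ≪≫ₗ (Submodule.Quotient.equiv _ _ e map_range).symm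

end Homology

section Resolutions

variable {C : Type*} [Category C] [Abelian C] {Z : C}

/-- The augmentation `P₀ → Z` of a projective resolution of `Z`, with target `Z` itself instead of
the degree zero term of the complex concentrated in degree zero. -/
def augmentation (P : ProjectiveResolution Z) : P.complex.X 0 ⟶ Z :=
  P.π.f 0

instance (P : ProjectiveResolution Z) : Epi (augmentation P) :=
  inferInstanceAs (Epi (P.π.f 0))

lemma d_comp_augmentation (P : ProjectiveResolution Z) :
    P.complex.d 1 0 ≫ augmentation P = 0 :=
  P.complex_d_comp_π_f_zero

lemma exact_augmentation (P : ProjectiveResolution Z) :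
    (ShortComplex.mk _ _ (d_comp_augmentation P)).Exact :=
  P.exact₀

/-- An exact complex of projective objects whose last differential has cokernel `Z`, as a
projective resolution of `Z`. -/
def resolutionOfExact (K : ChainComplex C ℕ) [∀ i, Projective (K.X i)] (π₀ : K.X 0 ⟶ Z)
    (epi_π₀ : Epi π₀) (w : K.d 1 0 ≫ π₀ = 0) (exact₀ : (ShortComplex.mk _ _ w).Exact)
    (exact_succ : ∀ i, K.ExactAt (i + 1)) : ProjectiveResolution Z where
  complex := K
  π := (ChainComplex.toSingle₀Equiv _ _).symm ⟨π₀, w⟩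
  quasiIso := ⟨fun i ↦ by
    cases i with
    | zero =>
      rw [ChainComplex.quasiIsoAt₀_iff,
        ShortComplex.quasiIso_iff_of_zeros' _ (K.shape _ _ (by simp)) rfl rfl]
      refine (ShortComplex.exact_and_epi_g_iff_of_iso ?_).2 ⟨exact₀, epi_π₀⟩
      exact ShortComplex.isoMk (Iso.refl _) (Iso.refl _) (Iso.refl _)
        ((Category.id_comp _).trans (Category.comp_id _).symm)
        ((Category.id_comp π₀).trans
          ((ChainComplex.toSingle₀Equiv_symm_apply_f_zero π₀ w).symm.trans
            (Category.comp_id _).symm))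
    | succ i =>
      rw [quasiIsoAt_iff_exactAt' _ _ (ChainComplex.exactAt_succ_single_obj _ _)]
      exact exact_succ i⟩

variable {S : ShortComplex C} (P : ProjectiveResolution S.X₁)

/-- The complex `⋯ → P₁ → P₀ → S.X₂`, where `P` is a resolution of `S.X₁`. -/
def spliceComplex : ChainComplex C ℕ :=
  P.complex.augment (augmentation P ≫ S.f) (by
    rw [← Category.assoc, d_comp_augmentation, Limits.zero_comp])

lemma spliceComplex_exactAt_succ [Mono S.f] (i : ℕ) : (spliceComplex P).ExactAt (i + 1) := by
  rw [HomologicalComplex.exactAt_iff' _ (i + 2) (i + 1) i (by simp) (by simp)]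
  cases i with
  | zero =>
    let φ : ShortComplex.mk _ _ (d_comp_augmentation P) ⟶ (spliceComplex P).sc' 2 1 0 :=
      { τ₁ := 𝟙 (P.complex.X 1)
        τ₂ := 𝟙 (P.complex.X 0)
        τ₃ := S.f
        comm₁₂ := (Category.id_comp _).trans (Category.comp_id _).symm
        comm₂₃ := Category.id_comp _ }
    have : Epi φ.τ₁ := inferInstanceAs (Epi (𝟙 _))
    have : IsIso φ.τ₂ := inferInstanceAs (IsIso (𝟙 _))
    have : Mono φ.τ₃ := ‹Mono S.f›
    exact (ShortComplex.exact_iff_of_epi_of_isIso_of_mono φ).1 (exact_augmentation P)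
  | succ i => exact P.exact_succ i

lemma spliceComplex_d_comp : (spliceComplex P).d 1 0 ≫ S.g = 0 :=
  show (augmentation P ≫ S.f) ≫ S.g = 0 by simp

lemma exact_spliceComplex_d (hS : S.Exact) :
    (ShortComplex.mk _ _ (spliceComplex_d_comp P)).Exact := by
  let φ : ShortComplex.mk _ _ (spliceComplex_d_comp P) ⟶ S :=
    { τ₁ := augmentation P
      τ₂ := 𝟙 S.X₂
      τ₃ := 𝟙 S.X₃
      comm₁₂ := (Category.comp_id _).symm
      comm₂₃ := (Category.id_comp _).trans (Category.comp_id _).symm }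
  have : Epi φ.τ₁ := inferInstanceAs (Epi (augmentation P))
  have : IsIso φ.τ₂ := inferInstanceAs (IsIso (𝟙 _))
  have : Mono φ.τ₃ := inferInstanceAs (Mono (𝟙 _))
  exact (ShortComplex.exact_iff_of_epi_of_isIso_of_mono φ).2 hS

instance [Projective S.X₂] : ∀ i, Projective ((spliceComplex P).X i)
  | 0 => ‹Projective S.X₂›
  | i + 1 => P.projective i

/-- The resolution `⋯ → P₁ → P₀ → S.X₂` of `S.X₃` obtained from a resolution `P` of `S.X₁`, for a
short exact sequence `S` with projective middle term. -/
def spliceResolution (hS : S.ShortExact) [Projective S.X₂] : ProjectiveResolution S.X₃ :=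
  have := hS.mono_f
  resolutionOfExact (spliceComplex P) S.g hS.epi_g (spliceComplex_d_comp P)
    (exact_spliceComplex_d P hS.exact) (spliceComplex_exactAt_succ P)

end Resolutions

variable {R : Type u} [CommRing R]

section ShortExact

variable {A B C : Type u} [AddCommGroup A] [Module R A] [AddCommGroup B] [Module R B]
  [AddCommGroup C] [Module R C] {f : A →ₗ[R] B} {g : B →ₗ[R] C}

lemma exact_range_subtype (hfg : Function.Exact f g) :
    Function.Exact (LinearMap.range f).subtype g := by
  rw [LinearMap.exact_iff, Submodule.range_subtype, hfg.linearMap_ker_eq]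

/-- The complex `range f → B → C` attached to an exact sequence `A → B → C`. -/
abbrev rangeComplex (hfg : Function.Exact f g) : ShortComplex (ModuleCat.{u} R) :=
  ShortComplex.moduleCatMk (LinearMap.range f).subtype g
    (exact_range_subtype hfg).linearMap_comp_eq_zero

lemma rangeComplex_shortExact (hfg : Function.Exact f g) (hg : Function.Surjective g) :
    (rangeComplex hfg).ShortExact :=
  ModuleCat.shortComplex_shortExact _ (exact_range_subtype hfg) (Submodule.subtype_injective _) hg

lemma exact_rangeRestrict (hfg : Function.Exact f g) : Function.Exact f g.rangeRestrict := by
  rw [LinearMap.exact_iff, LinearMap.ker_rangeRestrict, hfg.linearMap_ker_eq]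

end ShortExact

section Resolution

variable {Z : ModuleCat.{u} R} (P : ProjectiveResolution Z)

lemma function_exact_d (i : ℕ) :
    Function.Exact (P.complex.d (i + 2) (i + 1)).hom (P.complex.d (i + 1) i).hom :=
  (ShortComplex.ShortExact.moduleCat_exact_iff_function_exact _).1 (P.exact_succ i)

lemma function_exact_augmentation : Function.Exact (P.complex.d 1 0).hom (augmentation P).hom :=
  (ShortComplex.ShortExact.moduleCat_exact_iff_function_exact _).1 (exact_augmentation P)

lemma augmentation_surjective : Function.Surjective (augmentation P).hom :=
  (ModuleCat.epi_iff_surjective _).1 inferInstance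

end Resolution

section Ext

variable (N : Type u) [AddCommGroup N] [Module R N]

/-- The complex `Hom(X₃, N) → Hom(X₂, N) → Hom(X₁, N)`. For `N = R` it is the dual complex of
`S`. -/
abbrev homComplex (S : ShortComplex (ModuleCat.{u} R)) : ShortComplex (ModuleCat.{u} R) :=
  ShortComplex.moduleCatMk (LinearMap.lcomp R N S.g.hom) (LinearMap.lcomp R N S.f.hom) (by
    ext φ x
    simp [LinearMap.lcomp])

/-- The homology of the complex computing `Ext`, expressed with linear maps. -/
def extEquivHomology {Z : ModuleCat.{u} R} (P : ProjectiveResolution Z) (i : ℕ) :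
    extM R (i + 1) Z N ≃ₗ[R] (homComplex N (P.complex.sc' (i + 2) (i + 1) i)).homology :=
  let K := P.complex.linearYonedaObj R (ModuleCat.of R N)
  let φ : K.sc' i (i + 1) (i + 2) ≅ homComplex N (P.complex.sc' (i + 2) (i + 1) i) :=
    ShortComplex.isoMk ModuleCat.homLinearEquiv.toModuleIso ModuleCat.homLinearEquiv.toModuleIso
      ModuleCat.homLinearEquiv.toModuleIso
  (P.isoExt (R := R) (i + 1) (ModuleCat.of R N)).toLinearEquiv ≪≫ₗ
    (K.homologyIsoSc' i (i + 1) (i + 2) (by simp) (by simp)).toLinearEquiv ≪≫ₗ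
    (ShortComplex.homologyMapIso φ).toLinearEquiv

variable {S : ShortComplex (ModuleCat.{u} R)} (hS : S.ShortExact) [Projective S.X₂]

/-- Dimension shifting: a resolution of `S.X₁` is the truncation of one of `S.X₃`. -/
def extShift (i : ℕ) : extM R (i + 2) S.X₃ N ≃ₗ[R] extM R (i + 1) S.X₁ N :=
  let P := projectiveResolution S.X₁
  extEquivHomology N (spliceResolution P hS) (i + 1) ≪≫ₗ (extEquivHomology N P i).symm

/-- `Ext¹` of a quotient of a projective module. -/
def extOneEquiv : extM R 1 S.X₃ N ≃ₗ[R]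
    (S.X₁ →ₗ[R] N) ⧸ LinearMap.range (LinearMap.lcomp R N S.f.hom) :=
  let P := projectiveResolution S.X₁
  extEquivHomology N (spliceResolution P hS) 0 ≪≫ₗ
    homologyEquivQuotRange _ _ (LinearMap.lcomp R N (augmentation P).hom)
      rfl (LinearMap.lcomp_injective_of_surjective _ (augmentation_surjective P))
      (LinearMap.exact_lcomp_of_exact_of_surjective N (function_exact_augmentation P)
        (augmentation_surjective P))

/-- The cokernel formula for the homology of `Hom(S, N)` for exact `S`. -/
def homComplexHomologyEquiv {S : ShortComplex (ModuleCat.{u} R)} (hS : S.Exact) :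
    (homComplex N S).homology ≃ₗ[R] (LinearMap.range S.g.hom →ₗ[R] N) ⧸
      LinearMap.range (LinearMap.lcomp R N (LinearMap.range S.g.hom).subtype) :=
  have hfg : Function.Exact S.f.hom S.g.hom.rangeRestrict := exact_rangeRestrict
    ((ShortComplex.ShortExact.moduleCat_exact_iff_function_exact S).1 hS)
  homologyEquivQuotRange _ _ (LinearMap.lcomp R N S.g.hom.rangeRestrict) rfl
    (LinearMap.lcomp_injective_of_surjective _ S.g.hom.surjective_rangeRestrict)
    (LinearMap.exact_lcomp_of_exact_of_surjective N hfg S.g.hom.surjective_rangeRestrict)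

/-- `Ext¹` of the cokernel of an exact sequence ending in a projective module. -/
def extOneEquivHomology {S : ShortComplex (ModuleCat.{u} R)} (hS : S.Exact) [Projective S.X₃] :
    extM R 1 (S.X₃ ⧸ LinearMap.range S.g.hom) N ≃ₗ[R] (homComplex N S).homology :=
  have exact_mkQ := LinearMap.exact_map_mkQ_range S.g.hom
  have : Projective (rangeComplex exact_mkQ).X₂ := ‹Projective S.X₃›
  extOneEquiv N (rangeComplex_shortExact exact_mkQ (Submodule.mkQ_surjective _)) ≪≫ₗ
    (homComplexHomologyEquiv N hS).symm

end Ext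

section Snake

variable {M₁ M₂ M₃ N₁ N₂ N₃ C₁ C₂ : Type*}
  [AddCommGroup M₁] [Module R M₁] [AddCommGroup M₂] [Module R M₂] [AddCommGroup M₃] [Module R M₃]
  [AddCommGroup N₁] [Module R N₁] [AddCommGroup N₂] [Module R N₂] [AddCommGroup N₃] [Module R N₃]
  [AddCommGroup C₁] [Module R C₁] [AddCommGroup C₂] [Module R C₂]

/-- The isomorphism `ker i₃ ≃ ker (coker i₁ → coker i₂)` that the snake lemma yields when `i₂` is
injective. -/
def snakeKerEquiv {i₁ : M₁ →ₗ[R] N₁} {i₂ : M₂ →ₗ[R] N₂} {i₃ : M₃ →ₗ[R] N₃}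
    {f₁ : M₁ →ₗ[R] M₂} {f₂ : M₂ →ₗ[R] M₃} {g₁ : N₁ →ₗ[R] N₂} {g₂ : N₂ →ₗ[R] N₃}
    {π₁ : N₁ →ₗ[R] C₁} {π₂ : N₂ →ₗ[R] C₂} {G : C₁ →ₗ[R] C₂}
    (h₁ : g₁ ∘ₗ i₁ = i₂ ∘ₗ f₁) (h₂ : g₂ ∘ₗ i₂ = i₃ ∘ₗ f₂) (hG : G ∘ₗ π₁ = π₂ ∘ₗ g₁)
    (hf : Function.Exact f₁ f₂) (hg : Function.Exact g₁ g₂) (hi₁ : Function.Exact i₁ π₁)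
    (hi₂ : Function.Exact i₂ π₂) (hf₂ : Function.Surjective f₂) (hg₁ : Function.Injective g₁)
    (hπ₁ : Function.Surjective π₁) (injective_i₂ : Function.Injective i₂) :
    LinearMap.ker i₃ ≃ₗ[R] LinearMap.ker G :=
  let δ := SnakeLemma.δ' i₁ i₂ i₃ f₁ f₂ hf g₁ g₂ hg h₁ h₂ (LinearMap.ker i₃).subtype
    (LinearMap.exact_subtype_ker_map i₃) π₁ hi₁ hf₂ hg₁
  have exact_zero_δ : Function.Exact (0 : Unit →ₗ[R] LinearMap.ker i₃) δ :=
    SnakeLemma.exact_δ'_right i₁ i₂ i₃ f₁ f₂ hf g₁ g₂ hg h₁ h₂ 0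
      (by rwa [LinearMap.exact_zero_iff_injective]) _ _ π₁ hi₁ hf₂ hg₁ 0 (by simp)
      (Submodule.subtype_injective _)
  have exact_δ_G : Function.Exact δ G :=
    SnakeLemma.exact_δ'_left i₁ i₂ i₃ f₁ f₂ hf g₁ g₂ hg h₁ h₂ _ _ π₁ hi₁ π₂ hi₂ hf₂ hg₁ G hG hπ₁
  have injective_δ : Function.Injective δ := by
    rwa [LinearMap.exact_zero_iff_injective] at exact_zero_δ
  LinearEquiv.ofInjective δ injective_δ ≪≫ₗ LinearEquiv.ofEq _ _ exact_δ_G.linearMap_ker_eq.symm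

end Snake

section Tor

open TensorProduct MonoidalCategory

/-- The complex `X₁ ⊗ N → X₂ ⊗ N → X₃ ⊗ N`. -/
abbrev tensorComplex (N : Type u) [AddCommGroup N] [Module R N]
    (S : ShortComplex (ModuleCat.{u} R)) : ShortComplex (ModuleCat.{u} R) :=
  ShortComplex.moduleCatMk (S.f.hom.rTensor N) (S.g.hom.rTensor N) (by
    rw [← LinearMap.rTensor_comp, ← ModuleCat.hom_comp, S.zero, ModuleCat.hom_zero,
      LinearMap.rTensor_zero])

variable {S : ShortComplex (ModuleCat.{u} R)}

/-- Both kernels are `Tor₁(S.X₃, T.X₃)`, computed by resolving the second, respectively the first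
argument. -/
def kerTensorEquiv {T : ShortComplex (ModuleCat.{u} R)} (hS : S.ShortExact) (hT : T.ShortExact)
    [Module.Flat R S.X₂] [Module.Flat R T.X₂] :
    LinearMap.ker (T.f.hom.lTensor S.X₃) ≃ₗ[R] LinearMap.ker (S.f.hom.rTensor T.X₃) :=
  have exact_S : Function.Exact S.f.hom S.g.hom :=
    (ShortComplex.ShortExact.moduleCat_exact_iff_function_exact S).1 hS.exact
  have exact_T : Function.Exact T.f.hom T.g.hom :=
    (ShortComplex.ShortExact.moduleCat_exact_iff_function_exact T).1 hT.exact
  have surjective_S := hS.moduleCat_surjective_g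
  have surjective_T := hT.moduleCat_surjective_g
  snakeKerEquiv (i₁ := T.f.hom.lTensor S.X₁) (i₂ := T.f.hom.lTensor S.X₂)
    (f₁ := S.f.hom.rTensor T.X₁) (f₂ := S.g.hom.rTensor T.X₁)
    (g₁ := S.f.hom.rTensor T.X₂) (g₂ := S.g.hom.rTensor T.X₂)
    (π₁ := T.g.hom.lTensor S.X₁) (π₂ := T.g.hom.lTensor S.X₂)
    (by ext; simp) (by ext; simp) (by ext; simp)
    (rTensor_exact T.X₁ exact_S surjective_S) (rTensor_exact T.X₂ exact_S surjective_S)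
    (lTensor_exact S.X₁ exact_T surjective_T) (lTensor_exact S.X₂ exact_T surjective_T)
    (LinearMap.rTensor_surjective T.X₁ surjective_S)
    (Module.Flat.rTensor_preserves_injective_linearMap _ hS.moduleCat_injective_f)
    (LinearMap.lTensor_surjective S.X₁ surjective_T)
    (Module.Flat.lTensor_preserves_injective_linearMap _ hT.moduleCat_injective_f)

variable (N : Type u) [AddCommGroup N] [Module R N]

lemma ker_rTensor_eq_ker_lTensor {K P L Q : Type*} [AddCommGroup K] [Module R K]
    [AddCommGroup P] [Module R P] [AddCommGroup L] [Module R L] [AddCommGroup Q] [Module R Q]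
    [Module.Flat R P] [Module.Flat R Q] {j : K →ₗ[R] P} {s : L →ₗ[R] Q}
    (hj : Function.Injective j) (hs : Function.Injective s) :
    LinearMap.ker (j.rTensor L) = LinearMap.ker (s.lTensor K) := by
  have ker_lTensor_P : LinearMap.ker (s.lTensor P) = ⊥ :=
    LinearMap.ker_eq_bot.2 (Module.Flat.lTensor_preserves_injective_linearMap s hs)
  have ker_rTensor_Q : LinearMap.ker (j.rTensor Q) = ⊥ :=
    LinearMap.ker_eq_bot.2 (Module.Flat.rTensor_preserves_injective_linearMap j hj)
  calc LinearMap.ker (j.rTensor L)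
      = LinearMap.ker (s.lTensor P ∘ₗ j.rTensor L) :=
        (LinearMap.ker_comp_of_ker_eq_bot _ ker_lTensor_P).symm
    _ = LinearMap.ker (j.rTensor Q ∘ₗ s.lTensor K) := by
        rw [LinearMap.lTensor_comp_rTensor, LinearMap.rTensor_comp_lTensor]
    _ = LinearMap.ker (s.lTensor K) := LinearMap.ker_comp_of_ker_eq_bot _ ker_rTensor_Q

section Resolution

variable {N} (X : Type u) [AddCommGroup X] [Module R X]
  (Q : ProjectiveResolution (ModuleCat.of R N))

/-- Resolving the second argument, `Tor_{i+1}(X, N)` is the kernel of `X ⊗ Ω → X ⊗ Q_i`, where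
`Ω ⊆ Q_i` is the `(i+1)`-st syzygy of `N`. -/
def torEquivKer (i : ℕ) :
    torM R (i + 1) X N ≃ₗ[R]
      LinearMap.ker ((LinearMap.range (Q.complex.d (i + 1) i).hom).subtype.lTensor X) :=
  let G := (tensoringLeft (ModuleCat.{u} R)).obj (ModuleCat.of R X)
  let K := (G.mapHomologicalComplex _).obj Q.complex
  let d := (Q.complex.d (i + 1) i).hom
  have lTensor_d_eq : d.lTensor X =
      (LinearMap.range d).subtype.lTensor X ∘ₗ d.rangeRestrict.lTensor X := by
    rw [← LinearMap.lTensor_comp]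
    rfl
  (Q.isoLeftDerivedObj G (i + 1)).toLinearEquiv ≪≫ₗ
    (K.homologyIsoSc' (i + 2) (i + 1) i (by simp) (by simp)).toLinearEquiv ≪≫ₗ
    homologyEquivKer (K.sc' (i + 2) (i + 1) i) (d.rangeRestrict.lTensor X)
      ((LinearMap.range d).subtype.lTensor X) lTensor_d_eq
      (LinearMap.lTensor_surjective X d.surjective_rangeRestrict)
      (lTensor_exact X (exact_rangeRestrict (function_exact_d Q i)) d.surjective_rangeRestrict)

end Resolution

variable (hS : S.ShortExact) [Projective S.X₂]

/-- `Tor₁` of a quotient of a projective module. -/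
def torOneEquiv : torM R 1 S.X₃ N ≃ₗ[R] LinearMap.ker (S.f.hom.rTensor N) :=
  let Q := projectiveResolution (ModuleCat.of R N)
  have exact_Q := function_exact_augmentation Q
  have : Module.Flat R (rangeComplex exact_Q).X₂ :=
    inferInstanceAs (Module.Flat R (Q.complex.X 0))
  torEquivKer S.X₃ Q 0 ≪≫ₗ
    kerTensorEquiv hS (rangeComplex_shortExact exact_Q (augmentation_surjective Q))

/-- Dimension shifting. -/
def torShift (i : ℕ) : torM R (i + 2) S.X₃ N ≃ₗ[R] torM R (i + 1) S.X₁ N :=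
  let Q := projectiveResolution (ModuleCat.of R N)
  let d := (Q.complex.d (i + 1) i).hom
  have exact_d := exact_rangeRestrict (function_exact_d Q i)
  have : Module.Flat R (rangeComplex exact_d).X₂ :=
    inferInstanceAs (Module.Flat R (Q.complex.X (i + 1)))
  torEquivKer S.X₃ Q (i + 1) ≪≫ₗ
    kerTensorEquiv hS (rangeComplex_shortExact exact_d d.surjective_rangeRestrict) ≪≫ₗ
    LinearEquiv.ofEq _ _ (ker_rTensor_eq_ker_lTensor hS.moduleCat_injective_f
      (Submodule.subtype_injective _)) ≪≫ₗ (torEquivKer S.X₁ Q i).symm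

/-- The kernel formula for the homology of `S ⊗ N` for exact `S`. -/
def tensorComplexHomologyEquiv {S : ShortComplex (ModuleCat.{u} R)} (hS : S.Exact) :
    (tensorComplex N S).homology ≃ₗ[R]
      LinearMap.ker ((LinearMap.range S.g.hom).subtype.rTensor N) :=
  have hfg : Function.Exact S.f.hom S.g.hom.rangeRestrict := exact_rangeRestrict
    ((ShortComplex.ShortExact.moduleCat_exact_iff_function_exact S).1 hS)
  have rTensor_g_eq : S.g.hom.rTensor N =
      (LinearMap.range S.g.hom).subtype.rTensor N ∘ₗ S.g.hom.rangeRestrict.rTensor N := by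
    rw [← LinearMap.rTensor_comp]
    rfl
  homologyEquivKer (tensorComplex N S) (L := LinearMap.range S.g.hom ⊗[R] N)
    (S.g.hom.rangeRestrict.rTensor N) ((LinearMap.range S.g.hom).subtype.rTensor N) rTensor_g_eq
    (LinearMap.rTensor_surjective N S.g.hom.surjective_rangeRestrict)
    (rTensor_exact N hfg S.g.hom.surjective_rangeRestrict)

/-- `Tor₁` of the cokernel of an exact sequence ending in a projective module. -/
def torOneEquivHomology {S : ShortComplex (ModuleCat.{u} R)} (hS : S.Exact) [Projective S.X₃] :
    torM R 1 (S.X₃ ⧸ LinearMap.range S.g.hom) N ≃ₗ[R] (tensorComplex N S).homology :=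
  have exact_mkQ := LinearMap.exact_map_mkQ_range S.g.hom
  have : Projective (rangeComplex exact_mkQ).X₂ := ‹Projective S.X₃›
  torOneEquiv N (rangeComplex_shortExact exact_mkQ (Submodule.mkQ_surjective _)) ≪≫ₗ
    (tensorComplexHomologyEquiv N hS).symm

end Tor

section Syzygies

/-- `IsSyzygyOf C m K` says that `K` is an `m`-th syzygy of `C`, with respect to some sequence of
presentations by projective modules, not necessarily minimal ones. -/
inductive IsSyzygyOf (C : ModuleCat.{u} R) : ℕ → ModuleCat.{u} R → Prop
  | of_iso {K : ModuleCat.{u} R} (e : K ≅ C) : IsSyzygyOf C 0 K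
  | of_shortExact {m : ℕ} {S : ShortComplex (ModuleCat.{u} R)} (hS : S.ShortExact)
      [Projective S.X₂] (h : IsSyzygyOf C m S.X₃) : IsSyzygyOf C (m + 1) S.X₁

variable {C K : ModuleCat.{u} R} {m : ℕ} {A B D : Type u} [AddCommGroup A] [Module R A]
  [AddCommGroup B] [Module R B] [AddCommGroup D] [Module R D]

lemma IsSyzygyOf.range [Module.Projective R D] {g : B →ₗ[R] D}
    (h : IsSyzygyOf C m (ModuleCat.of R (D ⧸ LinearMap.range g))) :
    IsSyzygyOf C (m + 1) (ModuleCat.of R (LinearMap.range g)) :=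
  have exact_mkQ := LinearMap.exact_map_mkQ_range g
  have : Projective (rangeComplex exact_mkQ).X₂ :=
    (IsProjective.iff_projective (ModuleCat.of R D)).1 ‹_›
  .of_shortExact (rangeComplex_shortExact exact_mkQ (Submodule.mkQ_surjective _)) h

lemma IsSyzygyOf.quotRange [Module.Projective R D] {f : A →ₗ[R] B} {g : B →ₗ[R] D}
    (hfg : Function.Exact f g) (h : IsSyzygyOf C m (ModuleCat.of R (D ⧸ LinearMap.range g))) :
    IsSyzygyOf C (m + 1) (ModuleCat.of R (B ⧸ LinearMap.range f)) := by
  let j := (LinearMap.range f).liftQ g hfg.linearMap_ker_eq.ge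
  have injective_j : Function.Injective j :=
    LinearMap.ker_eq_bot.1 (Submodule.ker_liftQ_eq_bot _ _ _ hfg.linearMap_ker_eq.le)
  have exact_j : Function.Exact j (LinearMap.range g).mkQ := by
    rw [LinearMap.exact_iff, Submodule.ker_mkQ, Submodule.range_liftQ]
  let S := ShortComplex.moduleCatMk j (LinearMap.range g).mkQ exact_j.linearMap_comp_eq_zero
  have : Projective S.X₂ := (IsProjective.iff_projective (ModuleCat.of R D)).1 ‹_›
  have shortExact_S : S.ShortExact :=
    ModuleCat.shortComplex_shortExact _ exact_j injective_j (Submodule.mkQ_surjective _)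
  exact .of_shortExact shortExact_S h

variable (N : Type u) [AddCommGroup N] [Module R N]

lemma IsSyzygyOf.nonempty_tor_equiv (h : IsSyzygyOf C m K) (i : ℕ) :
    Nonempty (torM R (m + i + 1) C N ≃ₗ[R] torM R (i + 1) K N) := by
  induction h generalizing i with
  | of_iso e =>
    rw [zero_add]
    exact ⟨(((Tor (ModuleCat.{u} R) (i + 1)).mapIso e.symm).app (ModuleCat.of R N)).toLinearEquiv⟩
  | @of_shortExact m S hS _ _ ih =>
    rw [show m + 1 + i = m + (i + 1) by omega]
    exact ⟨(ih (i + 1)).some ≪≫ₗ torShift N hS i⟩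

lemma IsSyzygyOf.nonempty_ext_equiv (h : IsSyzygyOf C m K) (i : ℕ) :
    Nonempty (extM R (m + i + 1) C N ≃ₗ[R] extM R (i + 1) K N) := by
  induction h generalizing i with
  | of_iso e =>
    rw [zero_add]
    exact ⟨(((Ext R (ModuleCat.{u} R) (i + 1)).mapIso e.op).app (ModuleCat.of R N)).toLinearEquiv⟩
  | @of_shortExact m S hS _ _ ih =>
    rw [show m + 1 + i = m + (i + 1) by omega]
    exact ⟨(ih (i + 1)).some ≪≫ₗ extShift N hS i⟩

variable {S : ShortComplex (ModuleCat.{u} R)} [Projective S.X₃]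

lemma IsSyzygyOf.nonempty_tor_equiv_homology (hS : S.Exact)
    (h : IsSyzygyOf C m (ModuleCat.of R (S.X₃ ⧸ LinearMap.range S.g.hom))) :
    Nonempty (torM R (m + 1) C N ≃ₗ[R] (tensorComplex N S).homology) :=
  ⟨(h.nonempty_tor_equiv N 0).some ≪≫ₗ torOneEquivHomology N hS⟩

lemma IsSyzygyOf.nonempty_ext_equiv_homology (hS : S.Exact)
    (h : IsSyzygyOf C m (ModuleCat.of R (S.X₃ ⧸ LinearMap.range S.g.hom))) :
    Nonempty (extM R (m + 1) C N ≃ₗ[R] (homComplex N S).homology) :=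
  ⟨(h.nonempty_ext_equiv N 0).some ≪≫ₗ extOneEquivHomology N hS⟩

end Syzygies

section Duality

open TensorProduct

/-- The isomorphism `P ⊗ N ≃ Hom(P*, N)` for a finitely generated projective module `P`. -/
def tensorEquivDualHom (N P : Type*) [AddCommGroup N] [Module R N] [AddCommGroup P] [Module R P]
    [Module.Projective R P] [Module.Finite R P] : P ⊗[R] N ≃ₗ[R] (Module.Dual R P →ₗ[R] N) :=
  LinearEquiv.rTensor N (Module.evalEquiv R P) ≪≫ₗ dualTensorHomEquiv R (Module.Dual R P) N

lemma lcomp_dualMap_comp_tensorEquivDualHom {N P Q : Type*} [AddCommGroup N] [Module R N]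
    [AddCommGroup P] [Module R P] [Module.Projective R P] [Module.Finite R P]
    [AddCommGroup Q] [Module R Q] [Module.Projective R Q] [Module.Finite R Q] (f : P →ₗ[R] Q) :
    LinearMap.lcomp R N f.dualMap ∘ₗ (tensorEquivDualHom N P).toLinearMap =
      (tensorEquivDualHom N Q).toLinearMap ∘ₗ f.rTensor N := by
  ext p n φ
  simp [tensorEquivDualHom, dualTensorHomEquiv]

variable (N : Type u) [AddCommGroup N] [Module R N] {ι : Type*} {c : ComplexShape ι}
  (K : HomologicalComplex (ModuleCat.{u} R) c) [∀ i, Module.Projective R (K.X i)]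
  [∀ i, Module.Finite R (K.X i)] (i j k : ι)

/-- `K* ⊗ N ≅ Hom(K, N)` for a complex `K` of finitely generated projective modules. -/
def dualTensorIso : tensorComplex N (homComplex R (K.sc' i j k)) ≅ homComplex N (K.sc' i j k) :=
  ShortComplex.isoMk (dualTensorHomEquiv R (K.X k) N).toModuleIso
    (dualTensorHomEquiv R (K.X j) N).toModuleIso (dualTensorHomEquiv R (K.X i) N).toModuleIso
    (by exact congrArg ModuleCat.ofHom (dualTensorHom_comp_rTensor_dualMap (K.d j k).hom).symm)
    (by exact congrArg ModuleCat.ofHom (dualTensorHom_comp_rTensor_dualMap (K.d i j).hom).symm)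

/-- `Hom(K*, N) ≅ K ⊗ N` for a complex `K` of finitely generated projective modules. -/
def homDualIso : homComplex N (homComplex R (K.sc' i j k)) ≅ tensorComplex N (K.sc' i j k) :=
  let e (l : ι) := (tensorEquivDualHom N (K.X l)).toModuleIso
  Iso.symm <| ShortComplex.isoMk (e i) (e j) (e k)
    (by exact congrArg ModuleCat.ofHom (lcomp_dualMap_comp_tensorEquivDualHom (K.d i j).hom))
    (by exact congrArg ModuleCat.ofHom (lcomp_dualMap_comp_tensorEquivDualHom (K.d j k).hom))

end Duality

section Transpose

variable {Z : ModuleCat.{u} R} (P : ProjectiveResolution Z)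

lemma isSyzygyOf_quotRange_d :
    ∀ k, IsSyzygyOf Z k
      (ModuleCat.of R (P.complex.X k ⧸ LinearMap.range (P.complex.d (k + 1) k).hom))
  | 0 =>
    .of_iso ((function_exact_augmentation P).linearEquivOfSurjective
      (augmentation_surjective P)).toModuleIso
  | k + 1 => (isSyzygyOf_quotRange_d k).quotRange (function_exact_d P k)

lemma nonempty_tor_equiv_homology (N : Type u) [AddCommGroup N] [Module R N] (k : ℕ) :
    Nonempty (torM R (k + 1) Z N ≃ₗ[R]
      (tensorComplex N (P.complex.sc' (k + 2) (k + 1) k)).homology) :=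
  have : Projective (P.complex.sc' (k + 2) (k + 1) k).X₃ := P.projective k
  (isSyzygyOf_quotRange_d P k).nonempty_tor_equiv_homology N (P.exact_succ k)

lemma dual_exact_of_subsingleton_ext {k : ℕ} (h : Subsingleton (extM R (k + 1) Z R)) :
    (homComplex R (P.complex.sc' (k + 2) (k + 1) k)).Exact := by
  have := (extEquivHomology R P k).symm.toEquiv.subsingleton
  exact (ShortComplex.exact_iff_isZero_homology _).2 (ModuleCat.isZero_of_subsingleton _)

/-- The cokernel of `P_k* → P_{k+1}*`, which is `T_{k+1} Z` if the resolution `P` is minimal. -/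
abbrev resolutionTranspose (k : ℕ) : Type u :=
  Module.Dual R (P.complex.X (k + 1)) ⧸ LinearMap.range (P.complex.d (k + 1) k).hom.dualMap

variable [∀ i, Module.Finite R (P.complex.X i)]

lemma isSyzygyOf_resolutionTranspose {a b : ℕ}
    (h : ∀ k < a + b, Subsingleton (extM R (k + 1) Z R)) :
    IsSyzygyOf (ModuleCat.of R (resolutionTranspose P (a + b))) a
      (ModuleCat.of R (resolutionTranspose P b)) := by
  induction a generalizing b with
  | zero => exact .of_iso (by rw [zero_add])
  | succ a ih =>
    rw [show a + 1 + b = a + (b + 1) by omega] at h ⊢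
    have exact_dual :
        Function.Exact (P.complex.d (b + 1) b).hom.dualMap
          (P.complex.d (b + 2) (b + 1)).hom.dualMap :=
      (ShortComplex.ShortExact.moduleCat_exact_iff_function_exact _).1
        (dual_exact_of_subsingleton_ext P (h b (by omega)))
    exact (ih h).quotRange exact_dual

lemma isSyzygyOf_range_dualMap {m : ℕ} (h : ∀ k < m, Subsingleton (extM R (k + 1) Z R)) :
    IsSyzygyOf (ModuleCat.of R (resolutionTranspose P m)) (m + 1)
      (ModuleCat.of R (LinearMap.range (P.complex.d 1 0).hom.dualMap)) :=
  (isSyzygyOf_resolutionTranspose P (b := 0) h).range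

variable (N : Type u) [AddCommGroup N] [Module R N] {a b : ℕ}

lemma nonempty_tor_resolutionTranspose_equiv_ext
    (h : ∀ k < a + (b + 1), Subsingleton (extM R (k + 1) Z R)) :
    Nonempty (torM R (a + 1) (resolutionTranspose P (a + (b + 1))) N ≃ₗ[R] extM R (b + 1) Z N) := by
  let S := homComplex R (P.complex.sc' (b + 2) (b + 1) b)
  have exact_S : S.Exact := dual_exact_of_subsingleton_ext P (h b (by omega))
  have : Projective S.X₃ :=
    inferInstanceAs (Projective (ModuleCat.of R (Module.Dual R (P.complex.X (b + 2)))))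
  have syzygy : IsSyzygyOf (ModuleCat.of R (resolutionTranspose P (a + (b + 1)))) a
      (ModuleCat.of R (S.X₃ ⧸ LinearMap.range S.g.hom)) := isSyzygyOf_resolutionTranspose P h
  obtain ⟨e⟩ := syzygy.nonempty_tor_equiv_homology N exact_S
  exact ⟨e ≪≫ₗ (ShortComplex.homologyMapIso (dualTensorIso N P.complex _ _ _)).toLinearEquiv ≪≫ₗ
    (extEquivHomology N P b).symm⟩

lemma nonempty_ext_resolutionTranspose_equiv_tor
    (h : ∀ k < a + (b + 1), Subsingleton (extM R (k + 1) Z R)) :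
    Nonempty (extM R (a + 1) (resolutionTranspose P (a + (b + 1))) N ≃ₗ[R] torM R (b + 1) Z N) := by
  let S := homComplex R (P.complex.sc' (b + 2) (b + 1) b)
  have exact_S : S.Exact := dual_exact_of_subsingleton_ext P (h b (by omega))
  have : Projective S.X₃ :=
    inferInstanceAs (Projective (ModuleCat.of R (Module.Dual R (P.complex.X (b + 2)))))
  have syzygy : IsSyzygyOf (ModuleCat.of R (resolutionTranspose P (a + (b + 1)))) a
      (ModuleCat.of R (S.X₃ ⧸ LinearMap.range S.g.hom)) := isSyzygyOf_resolutionTranspose P h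
  obtain ⟨e⟩ := syzygy.nonempty_ext_equiv_homology N exact_S
  obtain ⟨e'⟩ := nonempty_tor_equiv_homology P N b
  exact ⟨e ≪≫ₗ (ShortComplex.homologyMapIso (homDualIso N P.complex _ _ _)).toLinearEquiv ≪≫ₗ
    e'.symm⟩

end Transpose

section Main

variable {M : Type u} [AddCommGroup M] [Module R M]

lemma subsingleton_ext_of_lt_rgr {i : ℕ} (hi : 0 < i) (h : (i : ℕ∞) < rgr R M) :
    Subsingleton (extM R i M R) := by
  by_contra not_subsingleton
  exact h.not_ge (sInf_le ⟨i, rfl, hi, not_subsingleton⟩)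

theorem stmt7_general (P : ProjectiveResolution (ModuleCat.of R M))
    [∀ i, Module.Finite R (P.complex.X i)] (N : Type u) [AddCommGroup N] [Module R N]
    (n : ℕ) (hn : 0 < n) (hrgr : (n : ℕ∞) ≤ rgr R M) :
    (∀ i : ℕ, 1 ≤ i → i < n →
      Nonempty (torM R i (resolutionTranspose P (n - 1)) N ≃ₗ[R] extM R (n - i) M N)) ∧
    (∀ i : ℕ, n < i →
      Nonempty (torM R i (resolutionTranspose P (n - 1)) N ≃ₗ[R]
        torM R (i - n) (LinearMap.range (P.complex.d 1 0).hom.dualMap) N)) ∧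
    (∀ i : ℕ, 1 ≤ i → i < n →
      Nonempty (extM R i (resolutionTranspose P (n - 1)) N ≃ₗ[R] torM R (n - i) M N)) ∧
    (∀ i : ℕ, n < i →
      Nonempty (extM R i (resolutionTranspose P (n - 1)) N ≃ₗ[R]
        extM R (i - n) (LinearMap.range (P.complex.d 1 0).hom.dualMap) N)) := by
  obtain ⟨m, rfl⟩ : ∃ m, n = m + 1 := ⟨n - 1, by omega⟩
  have ext_vanishes : ∀ k < m, Subsingleton (extM R (k + 1) M R) := fun k hk ↦
    subsingleton_ext_of_lt_rgr k.succ_pos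
      (lt_of_lt_of_le (by exact_mod_cast Nat.succ_lt_succ hk) hrgr)
  have low_degree : ∀ i, 1 ≤ i → i < m + 1 →
      ∃ a b, i = a + 1 ∧ m = a + (b + 1) ∧ m + 1 - i = b + 1 :=
    fun i _ _ ↦ ⟨i - 1, m - i, by omega, by omega, by omega⟩
  have high_degree : ∀ i, m + 1 < i → ∃ c, i = m + 1 + c + 1 ∧ i - (m + 1) = c + 1 :=
    fun i _ ↦ ⟨i - m - 2, by omega, by omega⟩
  have lambda_syzygy := isSyzygyOf_range_dualMap P ext_vanishes
  refine ⟨fun i hi hin ↦ ?_, fun i hi ↦ ?_, fun i hi hin ↦ ?_, fun i hi ↦ ?_⟩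
  · obtain ⟨a, b, rfl, rfl, h⟩ := low_degree i hi hin
    rw [h]
    exact nonempty_tor_resolutionTranspose_equiv_ext P N ext_vanishes
  · obtain ⟨c, rfl, h⟩ := high_degree i hi
    rw [h]
    exact lambda_syzygy.nonempty_tor_equiv N c
  · obtain ⟨a, b, rfl, rfl, h⟩ := low_degree i hi hin
    rw [h]
    exact nonempty_ext_resolutionTranspose_equiv_tor P N ext_vanishes
  · obtain ⟨c, rfl, h⟩ := high_degree i hi
    rw [h]
    exact lambda_syzygy.nonempty_ext_equiv N c

end Main

namespace MinRes

variable {M : Type u} [AddCommGroup M] [Module R M] (F : MinRes R M)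

lemma d_comp_d (i : ℕ) : F.d i ∘ₗ F.d (i + 1) = 0 :=
  LinearMap.range_le_ker_iff.1 (F.exact i).le

/-- The modules `P i` and the maps `d i` as a chain complex. -/
def complex : ChainComplex (ModuleCat.{u} R) ℕ :=
  ChainComplex.of F.P (fun i ↦ ModuleCat.ofHom (F.d i)) fun i ↦ ModuleCat.hom_ext (F.d_comp_d i)

lemma complex_d (i : ℕ) : F.complex.d (i + 1) i = ModuleCat.ofHom (F.d i) :=
  ChainComplex.of_d F.P (fun i ↦ ModuleCat.ofHom (F.d i)) i

instance (i : ℕ) : Projective (F.complex.X i) :=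
  (IsProjective.iff_projective (F.P i)).1 (F.projective i)

lemma complex_exactAt_succ (i : ℕ) : F.complex.ExactAt (i + 1) := by
  rw [HomologicalComplex.exactAt_iff' _ (i + 2) (i + 1) i (by simp) (by simp),
    ShortComplex.moduleCat_exact_iff_range_eq_ker]
  change LinearMap.range (F.complex.d (i + 2) (i + 1)).hom =
    LinearMap.ker (F.complex.d (i + 1) i).hom
  rw [complex_d, complex_d]
  exact F.exact i

lemma complex_d_comp_ε : F.complex.d 1 0 ≫ ModuleCat.ofHom F.ε = 0 := by
  rw [F.complex_d 0]
  exact ModuleCat.hom_ext (LinearMap.range_le_ker_iff.1 F.exact0.le)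

lemma exact_ε : (ShortComplex.mk _ _ F.complex_d_comp_ε).Exact := by
  rw [ShortComplex.moduleCat_exact_iff_range_eq_ker]
  change LinearMap.range (F.complex.d 1 0).hom = LinearMap.ker F.ε
  rw [F.complex_d 0]
  exact F.exact0

/-- A `MinRes` as a projective resolution in the category of modules, forgetting minimality. -/
def toProjectiveResolution : ProjectiveResolution (ModuleCat.of R M) :=
  resolutionOfExact F.complex (ModuleCat.ofHom F.ε) ((ModuleCat.epi_iff_surjective _).2 F.surj)
    F.complex_d_comp_ε F.exact_ε F.complex_exactAt_succ

instance (i : ℕ) : Module.Finite R (F.toProjectiveResolution.complex.X i) :=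
  F.finite i

lemma toProjectiveResolution_d (i : ℕ) :
    F.toProjectiveResolution.complex.d (i + 1) i = ModuleCat.ofHom (F.d i) :=
  F.complex_d i

end MinRes

end

section Statements

variable (R : Type u) [CommRing R] [IsNoetherianRing R]

theorem stmt7 (M N : Type u) [AddCommGroup M] [Module R M] [Module.Finite R M]
    [AddCommGroup N] [Module R N] [Module.Finite R N]
    (F : MinRes R M) (n : ℕ) (hn : 0 < n) (hrgr : (n : ℕ∞) ≤ rgr R M) :
    (∀ i : ℕ, 1 ≤ i → i < n →
      Nonempty (torM R i (F.T (n - 1)) N ≃ₗ[R] extM R (n - i) M N)) ∧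
    (∀ i : ℕ, n < i →
      Nonempty (torM R i (F.T (n - 1)) N ≃ₗ[R] torM R (i - n) F.lambdaMod N)) ∧
    (∀ i : ℕ, 1 ≤ i → i < n →
      Nonempty (extM R i (F.T (n - 1)) N ≃ₗ[R] torM R (n - i) M N)) ∧
    (∀ i : ℕ, n < i →
      Nonempty (extM R i (F.T (n - 1)) N ≃ₗ[R] extM R (i - n) F.lambdaMod N)) := by
  have main := stmt7_general F.toProjectiveResolution N n hn hrgr
  unfold resolutionTranspose at main
  rwa [F.toProjectiveResolution_d 0, F.toProjectiveResolution_d (n - 1)] at main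

end Statements
end

section
/- Let M and N be R-modules. (i) If M is horizontally linked, then Ext^i_R(M,M) ≅ Ext^i_R(λM, λM) for all i with 1 ≤ i < inf{rgr(M), rgr(λM)}; in particular, if Gdim_R(M) = 0 then Ext^i_R(M,M) ≅ Ext^i_R(λM, λM) for all i > 0. (ii) If M and N are horizontally self-linked (M ≅ λM and N ≅ λN), then Ext^i_R(M,N) ≅ Ext^i_R(N,M) for all i with 1 ≤ i < inf{rgr(M), rgr(N)}. -/
open CategoryTheory

/-!
For resolutions `P` of `M` and `Q` of `N`, consider the double complex of bilinear maps
`Hom(P p, Hom(Q q, E))`, and write `X^*` for `Hom(X, E)`. If `Ext^1(N, E) = 0`, a cocycle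
`P (n + 1) → im(Q₀^* → Q₁^*)` is the same as a bilinear map on `P (n + 1)` and `Q 1` killed by both
differentials, so `Ext^{n+1}(M, im(Q₀^* → Q₁^*))` is a subquotient of the double complex at
`(n + 1, 1)`. As long as `Ext(M, E)` and `Ext(N, E)` vanish, rows and columns are exact and a zigzag
identifies this subquotient with the one at `(1, n + 1)`; exchanging the variables gives
`Ext^{n+1}(N, im(P₀^* → P₁^*))`. For minimal resolutions and `E = R` this reads
`Ext^i(M, λN) ≅ Ext^i(N, λM)`, and both parts are instances of it: `N = λM` with `λN ≅ M`, or
`λM ≅ M` with `λN ≅ N`.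

If `M` has G-dimension zero, then `Ext^i(λM, R) = 0` for all `i > 0`, by dimension shifting along
`0 → M* → P₀* → λM → 0` and the reflexivity of `M`.
-/

noncomputable section

section Subquotient

variable {R X Y : Type*} [Ring R] [AddCommGroup X] [Module R X] [AddCommGroup Y] [Module R Y]

/-- The subquotient `K / (B ⊓ K)` of a module, used for cohomology (cocycles `K` modulo
coboundaries `B`) without having to carry a proof of `B ≤ K`. -/
abbrev Subquotient (K B : Submodule R X) : Type _ := K ⧸ B.submoduleOf K

/-- The isomorphism of subquotients induced by a linear map that carries `K` onto `K'` and along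
which `B'` pulls back to `B`. -/
def subquotientEquivOfMap (f : X →ₗ[R] Y) {K B : Submodule R X} {K' B' : Submodule R Y}
    (hK : K.map f = K') (hB : ∀ x ∈ K, f x ∈ B' ↔ x ∈ B) :
    Subquotient K B ≃ₗ[R] Subquotient K' B' :=
  have hf : ∀ x ∈ K, f x ∈ K' := fun x hx => hK ▸ Submodule.mem_map_of_mem hx
  have hsurj : Function.Surjective ((B'.submoduleOf K').mkQ ∘ₗ f.restrict hf) := by
    refine (Submodule.mkQ_surjective _).comp ?_
    rintro ⟨y, hy⟩
    obtain ⟨x, hx, rfl⟩ := hK ▸ hy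
    exact ⟨⟨x, hx⟩, rfl⟩
  have hker : B.submoduleOf K = LinearMap.ker ((B'.submoduleOf K').mkQ ∘ₗ f.restrict hf) := by
    rw [LinearMap.ker_comp, Submodule.ker_mkQ]
    ext x
    exact (hB x x.2).symm
  Submodule.quotEquivOfEq _ _ hker ≪≫ₗ LinearMap.quotKerEquivOfSurjective _ hsurj

theorem subsingleton_subquotient_iff {K B : Submodule R X} :
    Subsingleton (Subquotient K B) ↔ K ≤ B := by
  rw [Submodule.Quotient.subsingleton_iff, Submodule.submoduleOf_eq_top]

end Subquotient

section Zigzag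

variable {R A₀₁ A₁₀ A₁₁ A₁₂ A₂₁ A₂₂ A₁₃ A₃₁ : Type*} [Ring R]
  [AddCommGroup A₀₁] [Module R A₀₁] [AddCommGroup A₁₀] [Module R A₁₀]
  [AddCommGroup A₁₁] [Module R A₁₁] [AddCommGroup A₁₂] [Module R A₁₂]
  [AddCommGroup A₂₁] [Module R A₂₁] [AddCommGroup A₂₂] [Module R A₂₂]
  [AddCommGroup A₁₃] [Module R A₁₃] [AddCommGroup A₃₁] [Module R A₃₁]

/-- A zigzag in a double complex with differentials in the two directions `A₁₁ → A₂₁` and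
`A₁₁ → A₁₂`. Both sides are the image of the same subquotient of `A₁₁`: the elements killed by the
composite differential into `A₂₂`, modulo the boundaries of either direction. The map `b` allows
the composite `A₀₁ → A₁₂` to be presented with the differentials in the other order. -/
def zigzagEquiv {c : A₀₁ →ₗ[R] A₁₁} {h : A₁₁ →ₗ[R] A₂₁} {h' : A₂₁ →ₗ[R] A₃₁}
    {e : A₁₀ →ₗ[R] A₁₁} {v : A₁₁ →ₗ[R] A₁₂} {v' : A₁₂ →ₗ[R] A₁₃}
    {h₁ : A₁₂ →ₗ[R] A₂₂} {v₁ : A₂₁ →ₗ[R] A₂₂} {b : A₀₁ →ₗ[R] A₁₂}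
    (hc : Function.Exact c h) (hh : Function.Exact h h')
    (he : Function.Exact e v) (hv : Function.Exact v v') (hcomm : v₁ ∘ₗ h = h₁ ∘ₗ v)
    (hb : v ∘ₗ c = b) :
    Subquotient (LinearMap.ker h' ⊓ LinearMap.ker v₁) (LinearMap.range (h ∘ₗ e)) ≃ₗ[R]
      Subquotient (LinearMap.ker h₁ ⊓ LinearMap.ker v') (LinearMap.range b) :=
  let alongH : Subquotient (LinearMap.ker (v₁ ∘ₗ h)) (LinearMap.range e ⊔ LinearMap.range c) ≃ₗ[R]
      Subquotient (LinearMap.ker h' ⊓ LinearMap.ker v₁) (LinearMap.range (h ∘ₗ e)) :=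
    subquotientEquivOfMap h
      (by rw [LinearMap.ker_comp, Submodule.map_comap_eq, hh.linearMap_ker_eq])
      (fun x _ => by
        rw [← Submodule.mem_comap, LinearMap.range_comp, Submodule.comap_map_eq,
          hc.linearMap_ker_eq])
  let alongV : Subquotient (LinearMap.ker (v₁ ∘ₗ h)) (LinearMap.range e ⊔ LinearMap.range c) ≃ₗ[R]
      Subquotient (LinearMap.ker h₁ ⊓ LinearMap.ker v') (LinearMap.range b) :=
    subquotientEquivOfMap v
      (by rw [hcomm, LinearMap.ker_comp, Submodule.map_comap_eq, hv.linearMap_ker_eq, inf_comm])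
      (fun x _ => by
        rw [← Submodule.mem_comap, ← hb, LinearMap.range_comp, Submodule.comap_map_eq,
          he.linearMap_ker_eq, sup_comm])
  alongH.symm ≪≫ₗ alongV

end Zigzag

section Exactness

variable {R A B C E Q : Type*} [CommRing R] [AddCommGroup A] [Module R A] [AddCommGroup B]
  [Module R B] [AddCommGroup C] [Module R C] [AddCommGroup E] [Module R E] [AddCommGroup Q]
  [Module R Q]

theorem exact_compRight_of_projective [Module.Projective R Q] {f : A →ₗ[R] B} {g : B →ₗ[R] C}
    (h : Function.Exact f g) :
    Function.Exact (LinearMap.compRight R (M := Q) f) (LinearMap.compRight R (M := Q) g) := by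
  intro x
  constructor
  · intro hx
    have hrange (q : Q) : x q ∈ LinearMap.range f :=
      (h (x q)).1 (LinearMap.congr_fun hx q)
    obtain ⟨y, hy⟩ := Module.projective_lifting_property f.rangeRestrict
      (x.codRestrict _ hrange) f.surjective_rangeRestrict
    exact ⟨y, LinearMap.ext fun q => congrArg Subtype.val (LinearMap.congr_fun hy q)⟩
  · rintro ⟨y, rfl⟩
    exact LinearMap.ext fun q => h.apply_apply_eq_zero (y q)

theorem exact_lcomp_linearMap_of_projective [Module.Projective R Q] {f : A →ₗ[R] B}
    {g : B →ₗ[R] C} (h : Function.Exact (LinearMap.lcomp R E g) (LinearMap.lcomp R E f)) :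
    Function.Exact (LinearMap.lcomp R (Q →ₗ[R] E) g) (LinearMap.lcomp R (Q →ₗ[R] E) f) := by
  have hcol := exact_compRight_of_projective (Q := Q) h
  intro x
  constructor
  · intro hx
    obtain ⟨y, hy⟩ := (hcol x.flip).1 (by
      ext q a
      exact LinearMap.congr_fun (LinearMap.congr_fun hx a) q)
    exact ⟨y.flip, LinearMap.ext₂ fun b q => LinearMap.congr_fun (LinearMap.congr_fun hy q) b⟩
  · rintro ⟨y, rfl⟩
    exact LinearMap.ext₂ fun a q =>
      LinearMap.congr_fun (LinearMap.congr_fun (hcol.apply_apply_eq_zero y.flip) q) a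

end Exactness

/-- A projective resolution `⋯ → P 1 → P 0 → M → 0` written in terms of modules and linear maps:
a `MinRes` without the finiteness and minimality conditions. -/
structure ProjRes (R : Type u) [CommRing R] (M : Type u) [AddCommGroup M] [Module R M] where
  P : ℕ → ModuleCat.{u} R
  projective : ∀ i, Module.Projective R (P i)
  d : (i : ℕ) → P (i + 1) →ₗ[R] P i
  ε : P 0 →ₗ[R] M
  surjective_ε : Function.Surjective ε
  exact_zero : Function.Exact (d 0) ε
  exact_succ : ∀ i, Function.Exact (d (i + 1)) (d i)

attribute [instance] ProjRes.projective

namespace ProjRes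

variable {R M N : Type u} [CommRing R] [AddCommGroup M] [Module R M] [AddCommGroup N] [Module R N]

theorem nonempty (M : Type u) [AddCommGroup M] [Module R M] : Nonempty (ProjRes R M) :=
  let Q := ProjectiveResolution.of (ModuleCat.of R M)
  ⟨{ P := Q.complex.X
     projective := fun i => (IsProjective.iff_projective _).2 (Q.projective i)
     d := fun i => (Q.complex.d (i + 1) i).hom
     ε := (Q.π.f 0).hom
     surjective_ε := (ModuleCat.epi_iff_surjective (Q.π.f 0)).1 inferInstance
     exact_zero := (ShortComplex.ShortExact.moduleCat_exact_iff_function_exact _).1 Q.exact₀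
     exact_succ := fun i =>
      (ShortComplex.ShortExact.moduleCat_exact_iff_function_exact _).1 (Q.exact_succ i) }⟩

section ProjectiveResolution

variable (F : ProjRes R M)

/-- The chain complex of projectives underlying a `ProjRes`. -/
def complex : ChainComplex (ModuleCat.{u} R) ℕ :=
  ChainComplex.of F.P (fun i => ModuleCat.ofHom (F.d i)) fun i => by
    rw [← ModuleCat.ofHom_comp, (F.exact_succ i).linearMap_comp_eq_zero]
    rfl

theorem complex_d (i : ℕ) : F.complex.d (i + 1) i = ModuleCat.ofHom (F.d i) := by
  simp only [complex, ChainComplex.of_d]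

/-- The augmentation of the complex of projectives over the resolved module. -/
def augmentation :
    F.complex ⟶ (ChainComplex.single₀ (ModuleCat.{u} R)).obj (ModuleCat.of R M) :=
  (ChainComplex.toSingle₀Equiv _ _).symm ⟨ModuleCat.ofHom F.ε, by
    rw [complex_d]
    exact ModuleCat.hom_ext F.exact_zero.linearMap_comp_eq_zero⟩

theorem augmentation_f_zero : F.augmentation.f 0 = ModuleCat.ofHom F.ε :=
  ChainComplex.toSingle₀Equiv_symm_apply_f_zero _ _

theorem quasiIsoAt_augmentation_zero : QuasiIsoAt F.augmentation 0 := by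
  rw [ChainComplex.quasiIsoAt₀_iff, ShortComplex.quasiIso_iff_of_zeros' _ rfl rfl rfl]
  constructor
  · rw [ShortComplex.ShortExact.moduleCat_exact_iff_function_exact]
    change Function.Exact (F.complex.d 1 0).hom (F.augmentation.f 0).hom
    rw [augmentation_f_zero, F.complex_d 0]
    exact F.exact_zero
  · change Epi (F.augmentation.f 0)
    rw [augmentation_f_zero]
    exact (ModuleCat.epi_iff_surjective _).2 F.surjective_ε

theorem exactAt_complex_succ (n : ℕ) : F.complex.ExactAt (n + 1) := by
  rw [HomologicalComplex.exactAt_iff' _ (n + 2) (n + 1) n (by simp) (by simp),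
    ShortComplex.ShortExact.moduleCat_exact_iff_function_exact]
  change Function.Exact (F.complex.d (n + 2) (n + 1)).hom (F.complex.d (n + 1) n).hom
  rw [F.complex_d n, F.complex_d (n + 1)]
  exact F.exact_succ n

/-- A `ProjRes` as a projective resolution in the category of modules. -/
def toProjectiveResolution : ProjectiveResolution (ModuleCat.of R M) where
  complex := F.complex
  projective n := (IsProjective.iff_projective (F.P n)).1 (F.projective n)
  π := F.augmentation
  quasiIso := ⟨fun
    | 0 => F.quasiIsoAt_augmentation_zero
    | n + 1 => (quasiIsoAt_iff_exactAt' _ _ (ChainComplex.exactAt_succ_single_obj _ _)).2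
        (F.exactAt_complex_succ n)⟩

end ProjectiveResolution

section Cohomology

variable (F : ProjRes R M) (N)

/-- The cohomology of `Hom(P, N)` at `Hom(P (n + 1), N)`; it computes `Ext` in degree `n + 1`. -/
abbrev cohomology (n : ℕ) : Type u :=
  Subquotient (LinearMap.ker (LinearMap.lcomp R N (F.d (n + 1))))
    (LinearMap.range (LinearMap.lcomp R N (F.d n)))

/-- The short complex `Hom(P n, N) → Hom(P (n + 1), N) → Hom(P (n + 2), N)`. -/
def homShortComplex (n : ℕ) : ShortComplex (ModuleCat.{u} R) :=
  ShortComplex.moduleCatMk (LinearMap.lcomp R N (F.d n)) (LinearMap.lcomp R N (F.d (n + 1))) <| by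
    ext f x
    simp only [LinearMap.comp_apply, LinearMap.lcomp_apply,
      (F.exact_succ n).apply_apply_eq_zero, map_zero, LinearMap.zero_apply]

/-- The complex of morphisms in the category of modules agrees with the complex of linear maps. -/
def homShortComplexIso (n : ℕ) :
    (F.toProjectiveResolution.complex.linearYonedaObj R (ModuleCat.of R N)).sc' n (n + 1) (n + 2) ≅
      F.homShortComplex N n :=
  ShortComplex.isoMk (ModuleCat.homLinearEquiv (S := R)).toModuleIso
    (ModuleCat.homLinearEquiv (S := R)).toModuleIso (ModuleCat.homLinearEquiv (S := R)).toModuleIso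
    (by
      ext f
      change f.hom ∘ₗ F.d n = (F.complex.d (n + 1) n ≫ f).hom
      rw [complex_d]
      rfl)
    (by
      ext f
      change f.hom ∘ₗ F.d (n + 1) = (F.complex.d (n + 2) (n + 1) ≫ f).hom
      rw [F.complex_d (n + 1)]
      rfl)

/-- `Ext` in positive degrees is the cohomology of `Hom(P, N)`. -/
def extEquivCohomology (n : ℕ) : extM R (n + 1) M N ≃ₗ[R] F.cohomology N n :=
  let K := F.toProjectiveResolution.complex.linearYonedaObj R (ModuleCat.of R N)
  (F.toProjectiveResolution.isoExt (R := R) (n + 1) (ModuleCat.of R N) ≪≫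
    ShortComplex.homologyMapIso
      (K.isoSc' n (n + 1) (n + 2) (by simp) (by simp) ≪≫ F.homShortComplexIso N n) ≪≫
    (F.homShortComplex N n).moduleCatHomologyIso).toLinearEquiv ≪≫ₗ
  Submodule.quotEquivOfEq _ _ (LinearMap.range_codRestrict _ _ _)

variable {N}

theorem subsingleton_extM_iff_exact {n : ℕ} :
    Subsingleton (extM R (n + 1) M N) ↔
      Function.Exact (LinearMap.lcomp R N (F.d n)) (LinearMap.lcomp R N (F.d (n + 1))) := by
  rw [(F.extEquivCohomology N n).toEquiv.subsingleton_congr, subsingleton_subquotient_iff,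
    LinearMap.exact_iff]
  refine ⟨fun h => le_antisymm h ?_, le_of_eq⟩
  rw [LinearMap.range_le_ker_iff]
  exact ModuleCat.hom_ext_iff.1 (F.homShortComplex N n).zero

end Cohomology

section Corner

variable (F : ProjRes R M) (G : ProjRes R N) (E : Type u) [AddCommGroup E] [Module R E]

/-- The differential of the first variable on the double complex `Hom(P p, Hom(Q q, E))` of
bilinear maps on two resolutions. -/
abbrev dLeft (p q : ℕ) :
    (F.P p →ₗ[R] G.P q →ₗ[R] E) →ₗ[R] (F.P (p + 1) →ₗ[R] G.P q →ₗ[R] E) :=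
  LinearMap.lcomp R (G.P q →ₗ[R] E) (F.d p)

/-- The differential of the second variable on the double complex of bilinear maps. -/
abbrev dRight (p q : ℕ) :
    (F.P p →ₗ[R] G.P q →ₗ[R] E) →ₗ[R] (F.P p →ₗ[R] G.P (q + 1) →ₗ[R] E) :=
  LinearMap.compRight R (LinearMap.lcomp R E (G.d q))

/-- The bilinear maps on `P (p + 1)` and `Q (q + 1)` killed by both differentials, modulo those
that extend along both differentials at once. -/
abbrev corner (p q : ℕ) : Type u :=
  Subquotient
    (LinearMap.ker (dLeft F G E (p + 1) (q + 1)) ⊓ LinearMap.ker (dRight F G E (p + 1) (q + 1)))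
    (LinearMap.range (dLeft F G E p (q + 1) ∘ₗ dRight F G E p q))

/-- Exchanging the two variables of a bilinear map. -/
def cornerFlipEquiv (p q : ℕ) : corner F G E p q ≃ₗ[R] corner G F E q p :=
  subquotientEquivOfMap
    (LinearMap.lflip : (F.P (p + 1) →ₗ[R] G.P (q + 1) →ₗ[R] E) ≃ₗ[R] _).toLinearMap
    (by
      ext x
      constructor
      · rintro ⟨x, ⟨hleft, hright⟩, rfl⟩
        exact ⟨LinearMap.ext₂ fun a b => LinearMap.congr_fun₂ hright b a,
          LinearMap.ext₂ fun a b => LinearMap.congr_fun₂ hleft b a⟩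
      · rintro ⟨hleft, hright⟩
        exact ⟨x.flip, ⟨LinearMap.ext₂ fun a b => LinearMap.congr_fun₂ hright b a,
          LinearMap.ext₂ fun a b => LinearMap.congr_fun₂ hleft b a⟩, rfl⟩)
    (fun x _ => by
      constructor <;> rintro ⟨y, hy⟩ <;>
        exact ⟨y.flip, LinearMap.ext₂ fun a b => LinearMap.congr_fun₂ hy b a⟩)

variable {F G E}

theorem exact_dLeft {p : ℕ} (h : Subsingleton (extM R (p + 1) M E)) (q : ℕ) :
    Function.Exact (dLeft F G E p q) (dLeft F G E (p + 1) q) :=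
  exact_lcomp_linearMap_of_projective (F.subsingleton_extM_iff_exact.1 h)

theorem exact_dRight {q : ℕ} (h : Subsingleton (extM R (q + 1) N E)) (p : ℕ) :
    Function.Exact (dRight F G E p q) (dRight F G E p (q + 1)) :=
  exact_compRight_of_projective (G.subsingleton_extM_iff_exact.1 h)

variable (F G)

/-- A zigzag through `Hom(P (p + 1), Hom(Q (q + 1), E))`. -/
def cornerShiftEquiv {p q : ℕ}
    (hM : Subsingleton (extM R (p + 1) M E)) (hM' : Subsingleton (extM R (p + 2) M E))
    (hN : Subsingleton (extM R (q + 1) N E)) (hN' : Subsingleton (extM R (q + 2) N E)) :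
    corner F G E (p + 1) q ≃ₗ[R] corner F G E p (q + 1) :=
  zigzagEquiv (exact_dLeft hM (q + 1)) (exact_dLeft hM' (q + 1)) (exact_dRight hN (p + 1))
    (exact_dRight hN' (p + 1)) rfl rfl

theorem nonempty_corner_equiv_corner {n : ℕ}
    (hM : ∀ j ≤ n, Subsingleton (extM R (j + 1) M E))
    (hN : ∀ j ≤ n, Subsingleton (extM R (j + 1) N E)) {p q : ℕ} (hpq : p + q = n) :
    Nonempty (corner F G E p q ≃ₗ[R] corner F G E 0 n) := by
  induction p generalizing q with
  | zero =>
    obtain rfl : q = n := by omega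
    exact ⟨LinearEquiv.refl R _⟩
  | succ p ih =>
    obtain ⟨e⟩ := ih (q := q + 1) (by omega)
    exact ⟨cornerShiftEquiv F G (hM p (by omega)) (hM _ (by omega)) (hN q (by omega))
      (hN _ (by omega)) ≪≫ₗ e⟩

end Corner

section DualImage

variable (F : ProjRes R M) (G : ProjRes R N) (E : Type u) [AddCommGroup E] [Module R E]

/-- The image of `Hom(P k, E) → Hom(P (k + 1), E)`; for a minimal resolution, `E = R` and `k = 0`
this is `λM`. -/
abbrev dualImage (k : ℕ) : Submodule R (F.P (k + 1) →ₗ[R] E) :=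
  LinearMap.range (LinearMap.lcomp R E (F.d k))

variable {E}

/-- Composition with the inclusion of the dual image into `Hom(Q (q + 1), E)` turns cocycles into
bilinear maps. -/
def cohomologyDualImageEquivCorner (p : ℕ) {q : ℕ} (hN : Subsingleton (extM R (q + 1) N E)) :
    F.cohomology (G.dualImage E q) p ≃ₗ[R] corner F G E p q :=
  subquotientEquivOfMap (LinearMap.compRight R (G.dualImage E q).subtype)
    (by
      have hker := (G.subsingleton_extM_iff_exact.1 hN).linearMap_ker_eq
      ext x
      constructor
      · rintro ⟨x, hx, rfl⟩
        exact ⟨LinearMap.ext fun a => congrArg Subtype.val (LinearMap.congr_fun hx a),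
          LinearMap.ext fun a => hker.ge (x a).2⟩
      · rintro ⟨hleft, hright⟩
        exact ⟨x.codRestrict _ fun a => hker.le (LinearMap.congr_fun hright a),
          LinearMap.ext fun a => Subtype.ext (LinearMap.congr_fun hleft a), rfl⟩)
    (fun x _ => by
      constructor
      · rintro ⟨y, hy⟩
        exact ⟨(LinearMap.lcomp R E (G.d q)).rangeRestrict ∘ₗ y,
          LinearMap.ext fun a => Subtype.ext (LinearMap.congr_fun hy a)⟩
      · rintro ⟨c, rfl⟩
        obtain ⟨y, rfl⟩ := Module.projective_lifting_property
          (LinearMap.lcomp R E (G.d q)).rangeRestrict c (LinearMap.surjective_rangeRestrict _)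
        exact ⟨y, rfl⟩)

theorem nonempty_extM_dualImage_equiv {n : ℕ}
    (hM : ∀ j ≤ n, Subsingleton (extM R (j + 1) M E))
    (hN : ∀ j ≤ n, Subsingleton (extM R (j + 1) N E)) :
    Nonempty (extM R (n + 1) M (G.dualImage E 0) ≃ₗ[R] extM R (n + 1) N (F.dualImage E 0)) := by
  obtain ⟨shift⟩ := nonempty_corner_equiv_corner F G hM hN (add_zero n)
  exact ⟨F.extEquivCohomology _ n ≪≫ₗ
    cohomologyDualImageEquivCorner F G n (hN 0 n.zero_le) ≪≫ₗ shift ≪≫ₗ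
    cornerFlipEquiv F G E 0 n ≪≫ₗ
    (cohomologyDualImageEquivCorner G F n (hM 0 n.zero_le)).symm ≪≫ₗ
    (G.extEquivCohomology _ n).symm⟩

end DualImage

section Splice

variable {K L P₀ : Type u} [AddCommGroup K] [Module R K] [AddCommGroup L] [Module R L]
  [AddCommGroup P₀] [Module R P₀] [Module.Projective R P₀]
  (D : ProjRes R K) {ι : K →ₗ[R] P₀} {π : P₀ →ₗ[R] L}

/-- A resolution of `K` continued along a short exact sequence `0 → K → P₀ → L → 0` to a resolution
of `L`. -/
def splice (hι : Function.Injective ι) (hπ : Function.Surjective π) (hex : Function.Exact ι π) :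
    ProjRes R L where
  P := fun
    | 0 => ModuleCat.of R P₀
    | n + 1 => D.P n
  projective := fun
    | 0 => inferInstanceAs (Module.Projective R P₀)
    | n + 1 => D.projective n
  d := fun
    | 0 => ι ∘ₗ D.ε
    | n + 1 => D.d n
  ε := π
  surjective_ε := hπ
  exact_zero := D.surjective_ε.comp_exact_iff_exact.2 hex
  exact_succ := fun
    | 0 => hι.comp_exact_iff_exact.2 D.exact_zero
    | n + 1 => D.exact_succ n

theorem subsingleton_extM_one_of_surjective (hι : Function.Injective ι)
    (hπ : Function.Surjective π) (hex : Function.Exact ι π)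
    (hext : Function.Surjective (LinearMap.lcomp R N ι)) : Subsingleton (extM R 1 L N) := by
  obtain ⟨D⟩ := ProjRes.nonempty (R := R) K
  refine (D.splice hι hπ hex).subsingleton_extM_iff_exact.2 fun f => ⟨fun hf => ?_, ?_⟩
  · obtain ⟨g, rfl⟩ :=
      (LinearMap.exact_lcomp_of_exact_of_surjective N D.exact_zero D.surjective_ε f).1 hf
    obtain ⟨k, rfl⟩ := hext g
    exact ⟨k, rfl⟩
  · rintro ⟨k, rfl⟩
    exact LinearMap.ext fun x =>
      (congrArg (k ∘ₗ ι) (D.exact_zero.apply_apply_eq_zero x)).trans (map_zero _)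

theorem nonempty_extM_add_two_equiv (hι : Function.Injective ι) (hπ : Function.Surjective π)
    (hex : Function.Exact ι π) (n : ℕ) :
    Nonempty (extM R (n + 2) L N ≃ₗ[R] extM R (n + 1) K N) := by
  obtain ⟨D⟩ := ProjRes.nonempty (R := R) K
  exact ⟨(D.splice hι hπ hex).extEquivCohomology N (n + 1) ≪≫ₗ (D.extEquivCohomology N n).symm⟩

end Splice

end ProjRes

section ProjectiveCover

variable {R M P P' : Type u} [CommRing R] [AddCommGroup M] [Module R M] [AddCommGroup P]
  [Module R P] [AddCommGroup P'] [Module R P']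

theorem surjective_of_isSuperfluous_ker {f : P →ₗ[R] P'} {g : P' →ₗ[R] M}
    (hg : (LinearMap.ker g).IsSuperfluous) (hgf : Function.Surjective (g ∘ₗ f)) :
    Function.Surjective f := by
  refine LinearMap.range_eq_top.1 (hg _ ?_)
  rw [← Submodule.comap_map_eq, ← LinearMap.range_comp, LinearMap.range_eq_top.2 hgf,
    Submodule.comap_top]

theorem exists_equiv_of_projective_covers [Module.Projective R P] [Module.Projective R P']
    {ε : P →ₗ[R] M} {ε' : P' →ₗ[R] M} (hε : Function.Surjective ε) (hε' : Function.Surjective ε')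
    (hker : (LinearMap.ker ε).IsSuperfluous) (hker' : (LinearMap.ker ε').IsSuperfluous) :
    ∃ e : P ≃ₗ[R] P', ε' ∘ₗ e = ε := by
  obtain ⟨f, rfl⟩ := Module.projective_lifting_property ε' ε hε'
  have hf : Function.Surjective f := surjective_of_isSuperfluous_ker hker' hε
  obtain ⟨s, hs⟩ := Module.projective_lifting_property f LinearMap.id hf
  have hs_surj : Function.Surjective s := by
    refine surjective_of_isSuperfluous_ker hker ?_
    rwa [LinearMap.comp_assoc, hs, LinearMap.comp_id]
  have hinv : Function.LeftInverse f s := LinearMap.congr_fun hs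
  exact ⟨LinearEquiv.ofBijective f ⟨(hinv.rightInverse_of_surjective hs_surj).injective, hf⟩, rfl⟩

end ProjectiveCover

section ExtVanishing

variable {R M N N' : Type u} [CommRing R] [AddCommGroup M] [Module R M] [AddCommGroup N]
  [Module R N] [AddCommGroup N'] [Module R N']

/-- Functoriality of `Ext` in the second variable, for isomorphisms. -/
def extCongrRight (i : ℕ) (e : N ≃ₗ[R] N') : extM R i M N ≃ₗ[R] extM R i M N' :=
  (((Ext R (ModuleCat.{u} R) i).obj (Opposite.op (ModuleCat.of R M))).mapIso
    e.toModuleIso).toLinearEquiv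

theorem subsingleton_extM_of_lt_rgr {i : ℕ} (h : (i : ℕ∞) < rgr R M) (j : ℕ) (hj : 0 < j)
    (hji : j ≤ i) : Subsingleton (extM R j M R) := by
  by_contra hne
  exact ((Nat.cast_le.2 hji).trans_lt h).not_ge (sInf_le ⟨j, rfl, hj, hne⟩)

theorem isGDimZero_of_gDim_eq_zero (h : GDim R M = 0) : IsGDimZero R M := by
  have hne : {n : ℕ∞ | ∃ k : ℕ, n = k ∧ GDimLE R k (ModuleCat.of R M)}.Nonempty := by
    by_contra hempty
    rw [GDim, Set.not_nonempty_iff_eq_empty.1 hempty, sInf_empty] at h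
    exact ENat.top_ne_zero h
  obtain ⟨k, hk, hle⟩ := csInf_mem hne
  obtain rfl : k = 0 := by exact_mod_cast hk.symm.trans h
  exact hle

end ExtVanishing

namespace MinRes

variable {R M N : Type u} [CommRing R] [AddCommGroup M] [Module R M] [AddCommGroup N] [Module R N]

/-- The projective resolution underlying a minimal one. -/
def toProjRes (F : MinRes R M) : ProjRes R M where
  P := F.P
  projective := F.projective
  d := F.d
  ε := F.ε
  surjective_ε := F.surj
  exact_zero := LinearMap.exact_iff.2 F.exact0.symm
  exact_succ i := LinearMap.exact_iff.2 (F.exact i).symm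

/-- A minimal resolution of `M` regarded as one of an isomorphic module. -/
def ofEquiv (F : MinRes R M) (e : M ≃ₗ[R] N) : MinRes R N where
  __ := F
  ε := e ∘ₗ F.ε
  surj := e.surjective.comp F.surj
  exact0 := by rw [LinearEquiv.ker_comp, F.exact0]
  min_eps := by
    rw [LinearEquiv.ker_comp]
    exact F.min_eps

/-- The surjection `P₀* → λM`, the cokernel of `M* → P₀*`. -/
def toLambdaMod (F : MinRes R M) : Module.Dual R (F.P 0) →ₗ[R] F.lambdaMod :=
  (F.d 0).dualMap.rangeRestrict

theorem surjective_toLambdaMod (F : MinRes R M) : Function.Surjective F.toLambdaMod :=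
  LinearMap.surjective_rangeRestrict _

theorem exact_dualMap_ε_toLambdaMod (F : MinRes R M) :
    Function.Exact F.ε.dualMap F.toLambdaMod :=
  LinearMap.exact_iff.2 <| (LinearMap.ker_rangeRestrict (F.d 0).dualMap).trans
    (LinearMap.exact_lcomp_of_exact_of_surjective R F.toProjRes.exact_zero
      F.surj).linearMap_ker_eq

theorem nonempty_lambdaMod_equiv (F F' : MinRes R M) :
    Nonempty (F.lambdaMod ≃ₗ[R] F'.lambdaMod) := by
  have := F.projective 0
  have := F'.projective 0
  obtain ⟨e, he⟩ := exists_equiv_of_projective_covers F'.surj F.surj F'.min_eps F.min_eps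
  have hrange : (LinearMap.range F.ε.dualMap).map (e.dualMap : _ →ₗ[R] _) =
      LinearMap.range F'.ε.dualMap := by
    rw [← LinearMap.range_comp, ← he]
    rfl
  exact ⟨(F.exact_dualMap_ε_toLambdaMod.linearEquivOfSurjective F.surjective_toLambdaMod).symm ≪≫ₗ
    Submodule.Quotient.equiv _ _ e.dualMap hrange ≪≫ₗ
    F'.exact_dualMap_ε_toLambdaMod.linearEquivOfSurjective F'.surjective_toLambdaMod⟩

theorem nonempty_extM_lambdaMod_equiv (F : MinRes R M) (G : MinRes R N) {i : ℕ} (hi : 0 < i)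
    (hM : ∀ j, 0 < j → j ≤ i → Subsingleton (extM R j M R))
    (hN : ∀ j, 0 < j → j ≤ i → Subsingleton (extM R j N R)) :
    Nonempty (extM R i M G.lambdaMod ≃ₗ[R] extM R i N F.lambdaMod) := by
  obtain ⟨n, rfl⟩ := Nat.exists_eq_succ_of_ne_zero hi.ne'
  exact F.toProjRes.nonempty_extM_dualImage_equiv G.toProjRes
    (fun j hj => hM _ j.succ_pos (Nat.succ_le_succ hj))
    (fun j hj => hN _ j.succ_pos (Nat.succ_le_succ hj))

theorem exists_lambdaMod_equiv_of_isHorizontallyLinked (F : MinRes R M)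
    (h : IsHorizontallyLinked R M) :
    ∃ G : MinRes R F.lambdaMod, Nonempty (G.lambdaMod ≃ₗ[R] M) := by
  obtain ⟨F', G', hG'⟩ := h
  obtain ⟨e⟩ := F'.nonempty_lambdaMod_equiv F
  exact ⟨G'.ofEquiv e, hG'⟩

theorem nonempty_extM_self_equiv_extM_lambdaMod_self (F : MinRes R M)
    (h : IsHorizontallyLinked R M) {i : ℕ} (hi : 0 < i)
    (hM : ∀ j, 0 < j → j ≤ i → Subsingleton (extM R j M R))
    (hl : ∀ j, 0 < j → j ≤ i → Subsingleton (extM R j F.lambdaMod R)) :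
    Nonempty (extM R i M M ≃ₗ[R] extM R i F.lambdaMod F.lambdaMod) := by
  obtain ⟨G, ⟨e⟩⟩ := F.exists_lambdaMod_equiv_of_isHorizontallyLinked h
  obtain ⟨swap⟩ := F.nonempty_extM_lambdaMod_equiv G hi hM hl
  exact ⟨extCongrRight i e.symm ≪≫ₗ swap⟩

theorem subsingleton_extM_lambdaMod (F : MinRes R M)
    (heval : Function.Surjective (Module.Dual.eval R M))
    (hdual : ∀ i, 0 < i → Subsingleton (extM R i (Module.Dual R M) R)) {i : ℕ} (hi : 0 < i) :
    Subsingleton (extM R i F.lambdaMod R) := by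
  have := F.projective 0
  have := F.finite 0
  have hinj : Function.Injective F.ε.dualMap := LinearMap.dualMap_injective_of_surjective F.surj
  match i with
  | 1 =>
    refine ProjRes.subsingleton_extM_one_of_surjective hinj F.surjective_toLambdaMod
      F.exact_dualMap_ε_toLambdaMod fun g => ?_
    obtain ⟨m, rfl⟩ := heval g
    obtain ⟨p, rfl⟩ := F.surj m
    exact ⟨Module.Dual.eval R (F.P 0) p, rfl⟩
  | n + 2 =>
    obtain ⟨e⟩ := ProjRes.nonempty_extM_add_two_equiv (N := R) hinj F.surjective_toLambdaMod
      F.exact_dualMap_ε_toLambdaMod n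
    have := hdual (n + 1) n.succ_pos
    exact e.toEquiv.subsingleton

end MinRes

theorem stmt8_general (R : Type u) [CommRing R] (M N : Type u) [AddCommGroup M] [Module R M]
    [AddCommGroup N] [Module R N] (F : MinRes R M) (G : MinRes R N) :
    (IsHorizontallyLinked R M →
      ((∀ i : ℕ, 1 ≤ i → (i : ℕ∞) < min (rgr R M) (rgr R F.lambdaMod) →
        Nonempty (extM R i M M ≃ₗ[R] extM R i F.lambdaMod F.lambdaMod)) ∧
      (GDim R M = 0 → ∀ i : ℕ, 0 < i →
        Nonempty (extM R i M M ≃ₗ[R] extM R i F.lambdaMod F.lambdaMod)))) ∧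
    (Nonempty (M ≃ₗ[R] F.lambdaMod) → Nonempty (N ≃ₗ[R] G.lambdaMod) →
      ∀ i : ℕ, 1 ≤ i → (i : ℕ∞) < min (rgr R M) (rgr R N) →
        Nonempty (extM R i M N ≃ₗ[R] extM R i N M)) := by
  refine ⟨fun hlinked => ⟨fun i hi hrgr => ?_, fun hG i hi => ?_⟩, ?_⟩
  · obtain ⟨hM, hl⟩ := lt_min_iff.1 hrgr
    exact F.nonempty_extM_self_equiv_extM_lambdaMod_self hlinked hi
      (subsingleton_extM_of_lt_rgr hM) (subsingleton_extM_of_lt_rgr hl)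
  · obtain ⟨-, heval, hM, hdual⟩ := isGDimZero_of_gDim_eq_zero hG
    exact F.nonempty_extM_self_equiv_extM_lambdaMod_self hlinked hi (fun j hj _ => hM j hj)
      fun j hj _ => F.subsingleton_extM_lambdaMod heval.surjective hdual hj
  · rintro ⟨eM⟩ ⟨eN⟩ i hi hrgr
    obtain ⟨hM, hN⟩ := lt_min_iff.1 hrgr
    obtain ⟨swap⟩ := F.nonempty_extM_lambdaMod_equiv G hi
      (subsingleton_extM_of_lt_rgr hM) (subsingleton_extM_of_lt_rgr hN)
    exact ⟨extCongrRight i eN ≪≫ₗ swap ≪≫ₗ extCongrRight i eM.symm⟩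

end

section Statements

variable (R : Type u) [CommRing R] [IsNoetherianRing R]

theorem stmt8 (M N : Type u) [AddCommGroup M] [Module R M] [Module.Finite R M]
    [AddCommGroup N] [Module R N] [Module.Finite R N]
    (F : MinRes R M) (G : MinRes R N) :
    (IsHorizontallyLinked R M →
      ((∀ i : ℕ, 1 ≤ i → (i : ℕ∞) < min (rgr R M) (rgr R F.lambdaMod) →
        Nonempty (extM R i M M ≃ₗ[R] extM R i F.lambdaMod F.lambdaMod)) ∧
      (GDim R M = 0 → ∀ i : ℕ, 0 < i →
        Nonempty (extM R i M M ≃ₗ[R] extM R i F.lambdaMod F.lambdaMod)))) ∧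
    (Nonempty (M ≃ₗ[R] F.lambdaMod) → Nonempty (N ≃ₗ[R] G.lambdaMod) →
      ∀ i : ℕ, 1 ≤ i → (i : ℕ∞) < min (rgr R M) (rgr R N) →
        Nonempty (extM R i M N ≃ₗ[R] extM R i N M)) :=
  stmt8_general R M N F G

end Statements
end
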